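/- arXiv:2012.11023 — 2 statements merged into one kernel-verified Lean document; each statement's English description precedes it below -/
import Mathlib

section
/- Let s ≥ 0, and let p, θ > 0 with pθ > 1. If N_s < 2 + α + β, then the Grushin Lane–Emden system −Δ_s u = v^p, −Δ_s v = u^θ, u, v > 0 on ℝ^N admits no smooth stable solution. -/
open MeasureTheory Real

noncomputable section

/-- Euclidean norm on `Fin n → ℝ`. -/
def enorm' {n : ℕ} (x : Fin n → ℝ) : ℝ := Real.sqrt (∑ i, (x i) ^ 2)

/-- Points of `ℝ^N = ℝ^{N₁} × ℝ^{N₂}`. -/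
abbrev Pt (N₁ N₂ : ℕ) := (Fin N₁ → ℝ) × (Fin N₂ → ℝ)

variable {N₁ N₂ : ℕ}

/-- Partial derivative in the variable `x i`. -/
def pX (i : Fin N₁) (w : Pt N₁ N₂ → ℝ) (z : Pt N₁ N₂) : ℝ :=
  deriv (fun t => w (Function.update z.1 i t, z.2)) (z.1 i)

/-- Partial derivative in the variable `y j`. -/
def pY (j : Fin N₂) (w : Pt N₁ N₂ → ℝ) (z : Pt N₁ N₂) : ℝ :=
  deriv (fun t => w (z.1, Function.update z.2 j t)) (z.2 j)

/-- Laplacian in the `x`-variables. -/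
def lapX (w : Pt N₁ N₂ → ℝ) (z : Pt N₁ N₂) : ℝ := ∑ i, pX i (pX i w) z

/-- Laplacian in the `y`-variables. -/
def lapY (w : Pt N₁ N₂ → ℝ) (z : Pt N₁ N₂) : ℝ := ∑ j, pY j (pY j w) z

/-- The Grushin operator `Δ_s w = Δ_x w + |x|^{2s} Δ_y w`. -/
def grushinLap (s : ℝ) (w : Pt N₁ N₂ → ℝ) (z : Pt N₁ N₂) : ℝ :=
  lapX w z + (enorm' z.1) ^ (2 * s) * lapY w z

/-- Norm of the Grushin gradient: `|∇_s w| = (|∇_x w|² + |x|^{2s}|∇_y w|²)^{1/2}`. -/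
def grushinGrad (s : ℝ) (w : Pt N₁ N₂ → ℝ) (z : Pt N₁ N₂) : ℝ :=
  Real.sqrt ((∑ i, (pX i w z) ^ 2) + (enorm' z.1) ^ (2 * s) * ∑ j, (pY j w z) ^ 2)

/-- Hilbert–Schmidt norm of the Grushin Hessian `∇_s² w`. -/
def grushinHess (s : ℝ) (w : Pt N₁ N₂ → ℝ) (z : Pt N₁ N₂) : ℝ :=
  Real.sqrt ((∑ i, ∑ j, (pX i (pX j w) z) ^ 2)
    + 2 * (enorm' z.1) ^ (2 * s) * (∑ i, ∑ k, (pX i (pY k w) z) ^ 2)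
    + (enorm' z.1) ^ (4 * s) * ∑ h, ∑ k, (pY h (pY k w) z) ^ 2)

/-- Norm of the gradient in the `x`-variables only. -/
def gradXNorm (w : Pt N₁ N₂ → ℝ) (z : Pt N₁ N₂) : ℝ := Real.sqrt (∑ i, (pX i w z) ^ 2)

/-- Norm of the gradient in the `y`-variables only. -/
def gradYNorm (w : Pt N₁ N₂ → ℝ) (z : Pt N₁ N₂) : ℝ := Real.sqrt (∑ j, (pY j w z) ^ 2)

/-- HS norm of the Hessian in the `x`-variables only. -/
def hessXNorm (w : Pt N₁ N₂ → ℝ) (z : Pt N₁ N₂) : ℝ :=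
  Real.sqrt (∑ i, ∑ j, (pX i (pX j w) z) ^ 2)

/-- HS norm of the Hessian in the `y`-variables only. -/
def hessYNorm (w : Pt N₁ N₂ → ℝ) (z : Pt N₁ N₂) : ℝ :=
  Real.sqrt (∑ h, ∑ k, (pY h (pY k w) z) ^ 2)

/-- `(u,v)` is a smooth positive solution of the Grushin Lane–Emden system
`-Δ_s u = v^p`, `-Δ_s v = u^θ`, `u, v > 0` on `ℝ^N`. -/
def IsLaneEmdenSol (s p θ : ℝ) (u v : Pt N₁ N₂ → ℝ) : Prop :=
  ContDiff ℝ (⊤ : ℕ∞) u ∧ ContDiff ℝ (⊤ : ℕ∞) v ∧ (∀ z, 0 < u z) ∧ (∀ z, 0 < v z) ∧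
  (∀ z, -grushinLap s u z = (v z) ^ p) ∧ (∀ z, -grushinLap s v z = (u z) ^ θ)

/-- Stability of a solution `(u,v)`: there are `η ≥ 0` and smooth positive `ξ, ζ` with
`-Δ_s ξ = p v^{p-1} ζ + η ξ` and `-Δ_s ζ = θ u^{θ-1} ξ + η ζ`. -/
def IsStable (s p θ : ℝ) (u v : Pt N₁ N₂ → ℝ) : Prop :=
  ∃ (η : ℝ) (ξ ζ : Pt N₁ N₂ → ℝ), 0 ≤ η ∧
    ContDiff ℝ (⊤ : ℕ∞) ξ ∧ ContDiff ℝ (⊤ : ℕ∞) ζ ∧ (∀ z, 0 < ξ z) ∧ (∀ z, 0 < ζ z) ∧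
    (∀ z, -grushinLap s ξ z = p * (v z) ^ (p - 1) * ζ z + η * ξ z) ∧
    (∀ z, -grushinLap s ζ z = θ * (u z) ^ (θ - 1) * ξ z + η * ζ z)

/-! ### Calculus toolbox -/

/-- Smooth functions. -/
abbrev Sm (f : Pt N₁ N₂ → ℝ) : Prop := ContDiff ℝ (⊤ : ℕ∞) f

/-- Coordinate directions. -/
def ek : Fin N₁ ⊕ Fin N₂ → Pt N₁ N₂ :=
  Sum.elim (fun i => (Pi.single i 1, 0)) (fun j => (0, Pi.single j 1))

/-- Coordinate derivative. -/
def Dd (k : Fin N₁ ⊕ Fin N₂) (f : Pt N₁ N₂ → ℝ) (z : Pt N₁ N₂) : ℝ := fderiv ℝ f z (ek k)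

/-- Weights. -/
def wt (s : ℝ) (k : Fin N₁ ⊕ Fin N₂) (z : Pt N₁ N₂) : ℝ :=
  Sum.elim (fun _ => 1) (fun _ => (enorm' z.1) ^ (2 * s)) k

/-- Carre du champ. -/
def Gam (s : ℝ) (f g : Pt N₁ N₂ → ℝ) (z : Pt N₁ N₂) : ℝ :=
  ∑ k, wt s k z * (Dd k f z * Dd k g z)

/-- The operator. -/
def La (s : ℝ) (f : Pt N₁ N₂ → ℝ) (z : Pt N₁ N₂) : ℝ :=
  ∑ k, wt s k z * Dd k (Dd k f) z

lemma Sm.diff {f : Pt N₁ N₂ → ℝ} (hf : Sm f) : Differentiable ℝ f :=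
  hf.differentiable (by simp)

lemma Sm.Dd {f : Pt N₁ N₂ → ℝ} (hf : Sm f) (k : Fin N₁ ⊕ Fin N₂) : Sm (Dd k f) := by
  unfold _root_.Dd
  exact (hf.fderiv_right (m := (⊤ : ℕ∞)) (by simp)).clm_apply contDiff_const

lemma pX_eq {f : Pt N₁ N₂ → ℝ} (hf : Sm f) (i : Fin N₁) : pX i f = Dd (Sum.inl i) f := by
  funext z
  have h1 : HasFDerivAt f (fderiv ℝ f z) (Function.update z.1 i (z.1 i), z.2) := by
    simpa using (hf.diff z).hasFDerivAt
  have h2 : HasDerivAt (fun t : ℝ => ((Function.update z.1 i t, z.2) : Pt N₁ N₂))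
      ((Pi.single i 1, 0) : Pt N₁ N₂) (z.1 i) :=
    (hasDerivAt_update z.1 i (z.1 i)).prodMk (hasDerivAt_const _ _)
  exact (h1.comp_hasDerivAt (z.1 i) h2).deriv

lemma pY_eq {f : Pt N₁ N₂ → ℝ} (hf : Sm f) (j : Fin N₂) : pY j f = Dd (Sum.inr j) f := by
  funext z
  have h1 : HasFDerivAt f (fderiv ℝ f z) (z.1, Function.update z.2 j (z.2 j)) := by
    simpa using (hf.diff z).hasFDerivAt
  have h2 : HasDerivAt (fun t : ℝ => ((z.1, Function.update z.2 j t) : Pt N₁ N₂))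
      ((0, Pi.single j 1) : Pt N₁ N₂) (z.2 j) :=
    (hasDerivAt_const _ _).prodMk (hasDerivAt_update z.2 j (z.2 j))
  exact (h1.comp_hasDerivAt (z.2 j) h2).deriv

lemma grushinLap_eq {f : Pt N₁ N₂ → ℝ} (hf : Sm f) (s : ℝ) (z : Pt N₁ N₂) :
    grushinLap s f z = La s f z := by
  unfold grushinLap lapX lapY La
  rw [Fintype.sum_sum_type, Finset.mul_sum]
  congr 1
  · refine Finset.sum_congr rfl fun i _ => ?_
    rw [pX_eq hf, pX_eq (hf.Dd _)]; simp [wt]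
  · refine Finset.sum_congr rfl fun i _ => ?_
    rw [pY_eq hf, pY_eq (hf.Dd _)]; simp [wt]

lemma wt_nonneg (s : ℝ) (k : Fin N₁ ⊕ Fin N₂) (z : Pt N₁ N₂) : 0 ≤ wt s k z := by
  rcases k with i | j
  · simp [wt]
  · simp only [wt, Sum.elim_inr]; exact Real.rpow_nonneg (Real.sqrt_nonneg _) _

lemma wt_cont {s : ℝ} (hs : 0 ≤ s) (k : Fin N₁ ⊕ Fin N₂) :
    Continuous (fun z : Pt N₁ N₂ => wt s k z) := by
  rcases k with i | j
  · simp only [wt, Sum.elim_inl]; exact continuous_const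
  · simp only [wt, Sum.elim_inr]
    refine Continuous.rpow_const ?_ (fun _ => Or.inr (by positivity))
    unfold enorm'
    fun_prop

lemma wt_line (s : ℝ) (k : Fin N₁ ⊕ Fin N₂) (z : Pt N₁ N₂) (t : ℝ) :
    wt s k (z + t • ek k) = wt s k z := by
  rcases k with i | j <;> simp [wt, ek]

lemma Gam_comm (s : ℝ) (f g : Pt N₁ N₂ → ℝ) (z : Pt N₁ N₂) : Gam s f g z = Gam s g f z := by
  unfold Gam; exact Finset.sum_congr rfl fun k _ => by ring

lemma Gam_nonneg (s : ℝ) (f : Pt N₁ N₂ → ℝ) (z : Pt N₁ N₂) : 0 ≤ Gam s f f z :=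
  Finset.sum_nonneg fun k _ => mul_nonneg (wt_nonneg s k z) (mul_self_nonneg _)

lemma Gam_cs (s : ℝ) (f g : Pt N₁ N₂ → ℝ) (z : Pt N₁ N₂) :
    Gam s f g z ^ 2 ≤ Gam s f f z * Gam s g g z := by
  have h : ∀ x : ℝ, 0 ≤ Gam s f f z * (x * x) + (2 * Gam s f g z) * x + Gam s g g z := by
    intro x
    have : Gam s f f z * (x * x) + (2 * Gam s f g z) * x + Gam s g g z
        = ∑ k, wt s k z * (x * Dd k f z + Dd k g z) ^ 2 := by
      unfold Gam
      rw [Finset.sum_mul, Finset.mul_sum, Finset.sum_mul, ← Finset.sum_add_distrib,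
        ← Finset.sum_add_distrib]
      exact Finset.sum_congr rfl fun k _ => by ring
    rw [this]
    exact Finset.sum_nonneg fun k _ => mul_nonneg (wt_nonneg s k z) (sq_nonneg _)
  have := discrim_le_zero h
  unfold discrim at this
  nlinarith

lemma Dd_mul {f g : Pt N₁ N₂ → ℝ} (hf : Sm f) (hg : Sm g) (k : Fin N₁ ⊕ Fin N₂)
    (z : Pt N₁ N₂) :
    Dd k (fun z => f z * g z) z = f z * Dd k g z + g z * Dd k f z := by
  unfold Dd
  rw [fderiv_fun_mul (hf.diff z) (hg.diff z)]
  simp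

lemma Dd_add {f g : Pt N₁ N₂ → ℝ} (hf : Sm f) (hg : Sm g) (k : Fin N₁ ⊕ Fin N₂)
    (z : Pt N₁ N₂) :
    Dd k (fun z => f z + g z) z = Dd k f z + Dd k g z := by
  unfold Dd
  rw [fderiv_fun_add (hf.diff z) (hg.diff z)]
  simp

lemma Dd_cmul {f : Pt N₁ N₂ → ℝ} (hf : Sm f) (c : ℝ) (k : Fin N₁ ⊕ Fin N₂)
    (z : Pt N₁ N₂) :
    Dd k (fun z => c * f z) z = c * Dd k f z := by
  unfold Dd
  rw [fderiv_const_mul (hf.diff z)]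
  simp

lemma Gam_mul (s : ℝ) (f : Pt N₁ N₂ → ℝ) {g h : Pt N₁ N₂ → ℝ} (hg : Sm g) (hh : Sm h)
    (z : Pt N₁ N₂) :
    Gam s f (fun z => g z * h z) z = g z * Gam s f h z + h z * Gam s f g z := by
  unfold Gam
  rw [Finset.mul_sum, Finset.mul_sum, ← Finset.sum_add_distrib]
  exact Finset.sum_congr rfl fun k _ => by rw [Dd_mul hg hh]; ring

lemma La_mul (s : ℝ) {f g : Pt N₁ N₂ → ℝ} (hf : Sm f) (hg : Sm g) (z : Pt N₁ N₂) :
    La s (fun z => f z * g z) z = f z * La s g z + g z * La s f z + 2 * Gam s f g z := by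
  unfold La Gam
  rw [Finset.mul_sum, Finset.mul_sum, Finset.mul_sum, ← Finset.sum_add_distrib,
    ← Finset.sum_add_distrib]
  refine Finset.sum_congr rfl fun k _ => ?_
  have : Dd k (fun z => f z * g z) = fun z => f z * Dd k g z + g z * Dd k f z := by
    funext z; exact Dd_mul hf hg k z
  rw [this, Dd_add (hf.mul (hg.Dd k)) (hg.mul (hf.Dd k)), Dd_mul hf (hg.Dd k),
    Dd_mul hg (hf.Dd k)]
  ring

lemma La_add (s : ℝ) {f g : Pt N₁ N₂ → ℝ} (hf : Sm f) (hg : Sm g) (z : Pt N₁ N₂) :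
    La s (fun z => f z + g z) z = La s f z + La s g z := by
  unfold La
  rw [← Finset.sum_add_distrib]
  refine Finset.sum_congr rfl fun k _ => ?_
  have : Dd k (fun z => f z + g z) = fun z => Dd k f z + Dd k g z := by
    funext z; exact Dd_add hf hg k z
  rw [this, Dd_add (hf.Dd k) (hg.Dd k)]
  ring

lemma La_cmul (s c : ℝ) {f : Pt N₁ N₂ → ℝ} (hf : Sm f) (z : Pt N₁ N₂) :
    La s (fun z => c * f z) z = c * La s f z := by
  unfold La
  rw [Finset.mul_sum]
  refine Finset.sum_congr rfl fun k _ => ?_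
  have : Dd k (fun z => c * f z) = fun z => c * Dd k f z := by
    funext z; exact Dd_cmul hf c k z
  rw [this, Dd_cmul (hf.Dd k)]
  ring

lemma Sm.rpow {u : Pt N₁ N₂ → ℝ} (hu : Sm u) (hpos : ∀ z, 0 < u z) (a : ℝ) :
    Sm (fun z => u z ^ a) := by
  exact hu.rpow_const_of_ne (fun z => (hpos z).ne')

lemma Dd_rpow {u : Pt N₁ N₂ → ℝ} (hu : Sm u) (hpos : ∀ z, 0 < u z) (a : ℝ)
    (k : Fin N₁ ⊕ Fin N₂) (z : Pt N₁ N₂) :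
    Dd k (fun z => u z ^ a) z = a * u z ^ (a - 1) * Dd k u z := by
  unfold Dd
  rw [((hu.diff z).hasFDerivAt.rpow_const (p := a) (Or.inl (hpos z).ne')).fderiv]
  simp

lemma Gam_rpow (s : ℝ) (f : Pt N₁ N₂ → ℝ) {u : Pt N₁ N₂ → ℝ} (hu : Sm u)
    (hpos : ∀ z, 0 < u z) (a : ℝ) (z : Pt N₁ N₂) :
    Gam s f (fun z => u z ^ a) z = a * u z ^ (a - 1) * Gam s f u z := by
  unfold Gam
  rw [Finset.mul_sum]
  exact Finset.sum_congr rfl fun k _ => by rw [Dd_rpow hu hpos]; ring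

lemma La_rpow (s : ℝ) {u : Pt N₁ N₂ → ℝ} (hu : Sm u)
    (hpos : ∀ z, 0 < u z) (a : ℝ) (z : Pt N₁ N₂) :
    La s (fun z => u z ^ a) z = a * u z ^ (a - 1) * La s u z
      + a * (a - 1) * u z ^ (a - 1 - 1) * Gam s u u z := by
  unfold La Gam
  rw [Finset.mul_sum, Finset.mul_sum, ← Finset.sum_add_distrib]
  refine Finset.sum_congr rfl fun k _ => ?_
  have : Dd k (fun z => u z ^ a) = fun z => (a * u z ^ (a - 1)) * Dd k u z := by
    funext z; exact Dd_rpow hu hpos a k z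
  rw [this, Dd_mul (contDiff_const.mul (hu.rpow hpos _)) (hu.Dd k), Dd_cmul (hu.rpow hpos _),
    Dd_rpow hu hpos]
  ring

lemma Dd_pow {f : Pt N₁ N₂ → ℝ} (hf : Sm f) (n : ℕ) (k : Fin N₁ ⊕ Fin N₂) (z : Pt N₁ N₂) :
    Dd k (fun z => f z ^ (n + 1)) z = (n + 1) * f z ^ n * Dd k f z := by
  unfold Dd
  rw [((hf.diff z).hasFDerivAt.pow (n + 1)).fderiv]
  simp

lemma Gam_pow (s : ℝ) (g : Pt N₁ N₂ → ℝ) {f : Pt N₁ N₂ → ℝ} (hf : Sm f) (n : ℕ)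
    (z : Pt N₁ N₂) :
    Gam s g (fun z => f z ^ (n + 1)) z = (n + 1) * f z ^ n * Gam s g f z := by
  unfold Gam
  rw [Finset.mul_sum]
  exact Finset.sum_congr rfl fun k _ => by rw [Dd_pow hf]; ring

lemma La_pow (s : ℝ) {f : Pt N₁ N₂ → ℝ} (hf : Sm f) (n : ℕ) (z : Pt N₁ N₂) :
    La s (fun z => f z ^ (n + 2)) z = (n + 2) * f z ^ (n + 1) * La s f z
      + (n + 2) * (n + 1) * f z ^ n * Gam s f f z := by
  unfold La Gam
  rw [Finset.mul_sum, Finset.mul_sum, ← Finset.sum_add_distrib]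
  refine Finset.sum_congr rfl fun k _ => ?_
  have : Dd k (fun z => f z ^ (n + 2)) = fun z => ((n + 2 : ℝ) * f z ^ (n + 1)) * Dd k f z := by
    funext z; rw [Dd_pow hf (n + 1) k z]; push_cast; ring
  rw [this, Dd_mul (contDiff_const.mul (hf.pow _)) (hf.Dd k), Dd_cmul (hf.pow _),
    Dd_pow hf]
  ring

lemma Gam_cont {s : ℝ} (hs : 0 ≤ s) {f g : Pt N₁ N₂ → ℝ} (hf : Sm f) (hg : Sm g) :
    Continuous (Gam s f g) := by
  unfold Gam
  exact continuous_finsetSum _ fun k _ =>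
    (wt_cont hs k).mul ((hf.Dd k).continuous.mul (hg.Dd k).continuous)

lemma La_cont {s : ℝ} (hs : 0 ≤ s) {f : Pt N₁ N₂ → ℝ} (hf : Sm f) :
    Continuous (La s f) := by
  unfold La
  exact continuous_finsetSum _ fun k _ =>
    (wt_cont hs k).mul ((hf.Dd k).Dd k).continuous

lemma Dd_support {g : Pt N₁ N₂ → ℝ} (k : Fin N₁ ⊕ Fin N₂) {z : Pt N₁ N₂}
    (hz : z ∉ tsupport g) : Dd k g z = 0 := by
  unfold Dd
  rw [fderiv_of_notMem_tsupport ℝ hz]; simp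

/-- Integration by parts. -/
lemma ibp_aux {s : ℝ} (hs : 0 ≤ s) {f g : Pt N₁ N₂ → ℝ} (hf : Sm f) (hg : Sm g)
    {K : Set (Pt N₁ N₂)} (hc : IsCompact K)
    (h1 : ∀ k, ∀ z ∉ K, Dd k f z * Dd k g z = 0)
    (h2 : ∀ k, ∀ z ∉ K, Dd k (Dd k f) z * g z = 0)
    (h3 : ∀ k, ∀ z ∉ K, Dd k f z * g z = 0) :
    Integrable (fun z => Gam s f g z + La s f z * g z) ∧
      ∫ z, (Gam s f g z + La s f z * g z) = 0 := by
  have hi1 : ∀ k, Integrable (fun z => wt s k z * Dd k f z * Dd k g z) := fun k =>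
    (((wt_cont hs k).mul (hf.Dd k).continuous).mul (hg.Dd k).continuous).integrable_of_hasCompactSupport
      (HasCompactSupport.intro hc fun z hz => by simp [mul_assoc, h1 k z hz])
  have hi2 : ∀ k, Integrable (fun z => wt s k z * Dd k (Dd k f) z * g z) := fun k =>
    (((wt_cont hs k).mul ((hf.Dd k).Dd k).continuous).mul hg.continuous).integrable_of_hasCompactSupport
      (HasCompactSupport.intro hc fun z hz => by simp [mul_assoc, h2 k z hz])
  have hi3 : ∀ k, Integrable (fun z => wt s k z * Dd k f z * g z) := fun k =>
    (((wt_cont hs k).mul (hf.Dd k).continuous).mul hg.continuous).integrable_of_hasCompactSupport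
      (HasCompactSupport.intro hc fun z hz => by simp [mul_assoc, h3 k z hz])
  have : (volume : Measure (Pt N₁ N₂)).IsAddHaarMeasure :=
    Measure.prod.instIsAddHaarMeasure volume volume
  have key : ∀ k, ∫ z, wt s k z * Dd k f z * Dd k g z
      = - ∫ z, wt s k z * Dd k (Dd k f) z * g z := by
    intro k
    refine integral_bilinear_hasLineDerivAt_right_eq_neg_left_of_integrable
      (B := ContinuousLinearMap.mul ℝ ℝ) (v := ek k) (hi2 k) (hi1 k) (hi3 k) ?_ ?_
    · intro z _
      have h1 : HasLineDerivAt ℝ (Dd k f) (Dd k (Dd k f) z) z (ek k) :=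
        ((hf.Dd k).diff z).hasFDerivAt.hasLineDerivAt _
      unfold HasLineDerivAt at h1 ⊢
      simp only [wt_line]
      exact h1.const_mul _
    · intro z _
      exact (hg.diff z).hasFDerivAt.hasLineDerivAt _
  have heq : (fun z => Gam s f g z + La s f z * g z) = fun z =>
      ∑ k, (wt s k z * Dd k f z * Dd k g z + wt s k z * Dd k (Dd k f) z * g z) := by
    funext z
    unfold Gam La
    rw [Finset.sum_mul, ← Finset.sum_add_distrib]
    exact Finset.sum_congr rfl fun k _ => by ring
  rw [heq]
  refine ⟨integrable_finsetSum _ fun k _ => (hi1 k).add (hi2 k), ?_⟩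
  rw [integral_finsetSum (f := fun k z => wt s k z * Dd k f z * Dd k g z
      + wt s k z * Dd k (Dd k f) z * g z) _ fun k _ => (hi1 k).add (hi2 k)]
  refine Finset.sum_eq_zero fun k _ => ?_
  rw [integral_add (hi1 k) (hi2 k), key k]; ring

/-- Integration by parts, compact support on the second function. -/
lemma ibp {s : ℝ} (hs : 0 ≤ s) {f g : Pt N₁ N₂ → ℝ} (hf : Sm f) (hg : Sm g)
    (hc : HasCompactSupport g) :
    Integrable (fun z => Gam s f g z + La s f z * g z) ∧
      ∫ z, (Gam s f g z + La s f z * g z) = 0 := by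
  refine ibp_aux hs hf hg hc (fun k z hz => ?_) (fun k z hz => ?_) (fun k z hz => ?_)
  · rw [Dd_support k hz, mul_zero]
  · rw [image_eq_zero_of_notMem_tsupport hz, mul_zero]
  · rw [image_eq_zero_of_notMem_tsupport hz, mul_zero]

lemma Dd_support2 {f : Pt N₁ N₂ → ℝ} (k : Fin N₁ ⊕ Fin N₂) {z : Pt N₁ N₂}
    (hz : z ∉ tsupport f) : z ∉ tsupport (Dd k f) := by
  intro hz'
  refine hz ?_
  have : Function.support (Dd k f) ⊆ tsupport f := by
    intro y hy
    by_contra hcon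
    exact hy (Dd_support k hcon)
  exact closure_minimal this (isClosed_tsupport _) hz'

/-- Integration by parts, compact support on the first function. -/
lemma ibp' {s : ℝ} (hs : 0 ≤ s) {f g : Pt N₁ N₂ → ℝ} (hf : Sm f) (hg : Sm g)
    (hc : HasCompactSupport f) :
    Integrable (fun z => Gam s f g z + La s f z * g z) ∧
      ∫ z, (Gam s f g z + La s f z * g z) = 0 := by
  refine ibp_aux hs hf hg hc (fun k z hz => ?_) (fun k z hz => ?_) (fun k z hz => ?_)
  · rw [Dd_support k hz, zero_mul]
  · rw [Dd_support k (Dd_support2 k hz), zero_mul]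
  · rw [Dd_support k hz, zero_mul]

/-- Second order conditions at a maximum point. -/
lemma max_cond {G : Pt N₁ N₂ → ℝ} (hG : Sm G) {z : Pt N₁ N₂} (hz : ∀ y, G y ≤ G z)
    (k : Fin N₁ ⊕ Fin N₂) : Dd k G z = 0 ∧ Dd k (Dd k G) z ≤ 0 := by
  have hl : ∀ {F : Pt N₁ N₂ → ℝ}, Sm F → ∀ t : ℝ,
      HasDerivAt (fun t : ℝ => F (z + t • ek k)) (Dd k F (z + t • ek k)) t := by
    intro F hF t
    have h2 : HasDerivAt (fun t : ℝ => z + t • ek k) (ek k) t := by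
      simpa using ((hasDerivAt_id t).smul_const (ek k)).const_add z
    exact (hF.diff (z + t • ek k)).hasFDerivAt.comp_hasDerivAt t h2
  have hd : deriv (fun t : ℝ => G (z + t • ek k)) = fun t => Dd k G (z + t • ek k) :=
    funext fun t => (hl hG t).deriv
  have hmax : IsLocalMax (fun t : ℝ => G (z + t • ek k)) 0 :=
    Filter.Eventually.of_forall fun t => by simpa using hz _
  have h0 : Dd k G z = 0 := by
    have := hmax.deriv_eq_zero
    rw [hd] at this; simpa using this
  refine ⟨h0, ?_⟩
  by_contra hcon
  push Not at hcon
  have hdd : deriv (deriv (fun t : ℝ => G (z + t • ek k))) 0 = Dd k (Dd k G) z := by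
    rw [hd, (hl (hG.Dd k) 0).deriv]; simp
  have hmin : IsLocalMin (fun t : ℝ => G (z + t • ek k)) 0 :=
    isLocalMin_of_deriv_deriv_pos (by rw [hdd]; exact hcon) (by rw [hd]; simpa using h0)
      (hl hG 0).continuousAt
  have hconst : (fun t : ℝ => G (z + t • ek k)) =ᶠ[nhds 0] fun _ => G z := by
    filter_upwards [hmin] with t ht
    have h1 : G z ≤ G (z + t • ek k) := by simpa using ht
    exact le_antisymm (hz _) h1
  have : deriv (deriv (fun t : ℝ => G (z + t • ek k))) 0 = 0 := by
    rw [hconst.deriv.deriv_eq]; simp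
  rw [hdd] at this
  linarith

/-! ### Systems, scaling, cutoffs -/

/-- Stable solutions, in terms of `La`. -/
structure Sys (s p θ : ℝ) (u v ξ ζ : Pt N₁ N₂ → ℝ) : Prop where
  hu : Sm u
  hv : Sm v
  hξ : Sm ξ
  hζ : Sm ζ
  pu : ∀ z, 0 < u z
  pv : ∀ z, 0 < v z
  pξ : ∀ z, 0 < ξ z
  pζ : ∀ z, 0 < ζ z
  eu : ∀ z, La s u z = -(v z) ^ p
  ev : ∀ z, La s v z = -(u z) ^ θ
  eξ : ∀ z, La s ξ z ≤ -(p * (v z) ^ (p - 1) * ζ z)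
  eζ : ∀ z, La s ζ z ≤ -(θ * (u z) ^ (θ - 1) * ξ z)

lemma Sys.swap {s p θ : ℝ} {u v ξ ζ : Pt N₁ N₂ → ℝ} (h : Sys s p θ u v ξ ζ) :
    Sys s θ p v u ζ ξ :=
  ⟨h.hv, h.hu, h.hζ, h.hξ, h.pv, h.pu, h.pζ, h.pξ, h.ev, h.eu, h.eζ, h.eξ⟩

lemma Sys.of_stable {s p θ : ℝ} {u v : Pt N₁ N₂ → ℝ} (h : IsLaneEmdenSol s p θ u v)
    (h' : IsStable s p θ u v) : ∃ ξ ζ, Sys s p θ u v ξ ζ := by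
  obtain ⟨hu, hv, pu, pv, eu, ev⟩ := h
  obtain ⟨η, ξ, ζ, hη, hξ, hζ, pξ, pζ, eξ, eζ⟩ := h'
  refine ⟨ξ, ζ, hu, hv, hξ, hζ, pu, pv, pξ, pζ, fun z => ?_, fun z => ?_, fun z => ?_, fun z => ?_⟩
  · rw [← grushinLap_eq hu, ← eu z]; ring
  · rw [← grushinLap_eq hv, ← ev z]; ring
  · rw [← grushinLap_eq hξ]
    have := eξ z
    have h2 := mul_nonneg hη (pξ z).le
    linarith
  · rw [← grushinLap_eq hζ]
    have := eζ z
    have h2 := mul_nonneg hη (pζ z).le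
    linarith

/-- Anisotropic dilations. -/
def dl (s R : ℝ) : Pt N₁ N₂ →L[ℝ] Pt N₁ N₂ :=
  (R • ContinuousLinearMap.id ℝ (Fin N₁ → ℝ)).prodMap
    ((R ^ (1 + s)) • ContinuousLinearMap.id ℝ (Fin N₂ → ℝ))

lemma dl_apply (s R : ℝ) (z : Pt N₁ N₂) : dl s R z = (R • z.1, R ^ (1 + s) • z.2) := rfl

/-- Scaling factors. -/
def rk (s R : ℝ) (k : Fin N₁ ⊕ Fin N₂) : ℝ := Sum.elim (fun _ => R) (fun _ => R ^ (1 + s)) k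

lemma dl_ek (s R : ℝ) (k : Fin N₁ ⊕ Fin N₂) :
    (dl s R (ek k) : Pt N₁ N₂) = rk s R k • ek k := by
  rcases k with i | j <;> simp [dl_apply, ek, rk]

lemma Sm.dl {f : Pt N₁ N₂ → ℝ} (hf : Sm f) (s R : ℝ) : Sm (fun z => f (dl s R z)) :=
  hf.comp (_root_.dl s R).contDiff

lemma Dd_dl {f : Pt N₁ N₂ → ℝ} (hf : Sm f) (s R : ℝ) (k : Fin N₁ ⊕ Fin N₂) (z : Pt N₁ N₂) :
    Dd k (fun z => f (dl s R z)) z = rk s R k * Dd k f (dl s R z) := by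
  unfold Dd
  have h := (hf.diff (dl s R z)).hasFDerivAt.comp z (dl s R).hasFDerivAt
  have h' : fderiv ℝ (fun z => f (dl s R z)) z = (fderiv ℝ f (dl s R z)).comp (dl s R) := h.fderiv
  rw [h']
  simp [dl_ek]

lemma wt_dl {s R : ℝ} (hR : 0 < R) (k : Fin N₁ ⊕ Fin N₂) (z : Pt N₁ N₂) :
    wt s k z * rk s R k ^ 2 = R ^ 2 * wt s k (dl s R z) := by
  rcases k with i | j
  · simp [wt, rk]
  · simp only [wt, rk, Sum.elim_inr, dl_apply]
    have h1 : enorm' (R • z.1) = R * enorm' z.1 := by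
      unfold enorm'
      have : ∑ i, (R • z.1) i ^ 2 = R ^ 2 * ∑ i, z.1 i ^ 2 := by
        rw [Finset.mul_sum]
        exact Finset.sum_congr rfl fun i _ => by simp [mul_pow]
      rw [this, Real.sqrt_mul (by positivity), Real.sqrt_sq hR.le]
    rw [h1, Real.mul_rpow hR.le (show 0 ≤ enorm' z.1 from Real.sqrt_nonneg _)]
    have h2 : (R ^ (1 + s)) ^ 2 = R ^ 2 * R ^ (2 * s) := by
      rw [← Real.rpow_natCast, ← Real.rpow_mul hR.le, ← Real.rpow_natCast R 2,
        ← Real.rpow_add hR]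
      congr 1; push_cast; ring
    rw [h2]; ring

lemma La_dl {f : Pt N₁ N₂ → ℝ} (hf : Sm f) {s R : ℝ} (hR : 0 < R) (z : Pt N₁ N₂) :
    La s (fun z => f (dl s R z)) z = R ^ 2 * La s f (dl s R z) := by
  unfold La
  rw [Finset.mul_sum]
  refine Finset.sum_congr rfl fun k _ => ?_
  have : Dd k (fun z => f (dl s R z)) = fun z => rk s R k * Dd k f (dl s R z) :=
    funext fun z => Dd_dl hf s R k z
  rw [this, Dd_cmul ((hf.Dd k).dl s R), Dd_dl (hf.Dd k), ← mul_assoc (R ^ 2), ← wt_dl hR]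
  ring

lemma La_scale {f : Pt N₁ N₂ → ℝ} (hf : Sm f) {s R : ℝ} (hR : 0 < R) (a : ℝ) (z : Pt N₁ N₂) :
    La s (fun z => R ^ a * f (dl s R z)) z = R ^ (a + 2) * La s f (dl s R z) := by
  rw [La_cmul s _ (hf.dl s R), La_dl hf hR, Real.rpow_add hR, ← mul_assoc]
  norm_cast

lemma Sys.scale {s p θ : ℝ} {u v ξ ζ : Pt N₁ N₂ → ℝ} (h : Sys s p θ u v ξ ζ)
    {α β R : ℝ} (h1 : β * p = α + 2) (h2 : α * θ = β + 2) (hR : 0 < R) :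
    Sys s p θ (fun z => R ^ α * u (dl s R z)) (fun z => R ^ β * v (dl s R z))
      (fun z => R ^ α * ξ (dl s R z)) (fun z => R ^ β * ζ (dl s R z)) := by
  have pos : ∀ a : ℝ, 0 < R ^ a := fun a => Real.rpow_pos_of_pos hR a
  have hadd : ∀ a b : ℝ, R ^ (a + b) = R ^ a * R ^ b := fun a b => Real.rpow_add hR a b
  refine ⟨contDiff_const.mul (h.hu.dl s R), contDiff_const.mul (h.hv.dl s R),
    contDiff_const.mul (h.hξ.dl s R), contDiff_const.mul (h.hζ.dl s R),
    fun z => mul_pos (pos _) (h.pu _), fun z => mul_pos (pos _) (h.pv _),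
    fun z => mul_pos (pos _) (h.pξ _), fun z => mul_pos (pos _) (h.pζ _),
    fun z => ?_, fun z => ?_, fun z => ?_, fun z => ?_⟩
  · rw [La_scale h.hu hR, h.eu, Real.mul_rpow (pos _).le (h.pv _).le, ← Real.rpow_mul hR.le, h1]
    ring
  · rw [La_scale h.hv hR, h.ev, Real.mul_rpow (pos _).le (h.pu _).le, ← Real.rpow_mul hR.le, h2]
    ring
  · rw [La_scale h.hξ hR, Real.mul_rpow (pos _).le (h.pv _).le, ← Real.rpow_mul hR.le]
    refine (mul_le_mul_of_nonneg_left (h.eξ _) (pos _).le).trans (le_of_eq ?_)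
    rw [show α + 2 = β * (p - 1) + β by rw [← h1]; ring, hadd]
    ring
  · rw [La_scale h.hζ hR, Real.mul_rpow (pos _).le (h.pu _).le, ← Real.rpow_mul hR.le]
    refine (mul_le_mul_of_nonneg_left (h.eζ _) (pos _).le).trans (le_of_eq ?_)
    rw [show β + 2 = α * (θ - 1) + α by rw [← h2]; ring, hadd]
    ring

/-- Cutoff functions with bounds. -/
structure Cut (s C₀ : ℝ) (χ : Pt N₁ N₂ → ℝ) : Prop where
  sm : Sm χ
  cs : HasCompactSupport χ
  nn : ∀ z, 0 ≤ χ z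
  le1 : ∀ z, χ z ≤ 1
  one : ∀ z, z ∈ Metric.closedBall (0 : Pt N₁ N₂) 1 → χ z = 1
  C1 : 1 ≤ C₀
  gam : ∀ z, Gam s χ χ z ≤ C₀
  la : ∀ z, |La s χ z| ≤ C₀

lemma exists_cut {s : ℝ} (hs : 0 ≤ s) : ∃ (C₀ : ℝ) (χ : Pt N₁ N₂ → ℝ), Cut s C₀ χ := by
  let f : ContDiffBump (0 : Pt N₁ N₂) := ⟨1, 2, by norm_num, by norm_num⟩
  have hsm : Sm (f : Pt N₁ N₂ → ℝ) := f.contDiff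
  have hcs : HasCompactSupport (f : Pt N₁ N₂ → ℝ) := f.hasCompactSupport
  have hD : ∀ {g : Pt N₁ N₂ → ℝ} (k : Fin N₁ ⊕ Fin N₂) {z}, z ∉ tsupport (f : Pt N₁ N₂ → ℝ) →
      z ∉ tsupport (Dd k (f : Pt N₁ N₂ → ℝ)) := by
    intro g k z hz hz'
    refine hz ?_
    have : Function.support (Dd k (f : Pt N₁ N₂ → ℝ)) ⊆ tsupport (f : Pt N₁ N₂ → ℝ) := by
      intro y hy
      by_contra hcon
      exact hy (Dd_support k hcon)
    exact closure_minimal this (isClosed_tsupport _) hz'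
  have hg : HasCompactSupport (Gam s (f : Pt N₁ N₂ → ℝ) f) :=
    HasCompactSupport.intro hcs fun z hz => by
      unfold Gam
      exact Finset.sum_eq_zero fun k _ => by rw [Dd_support k hz]; ring
  have hl : HasCompactSupport (La s (f : Pt N₁ N₂ → ℝ)) :=
    HasCompactSupport.intro hcs fun z hz => by
      unfold La
      exact Finset.sum_eq_zero fun k _ => by rw [Dd_support k (hD (g := f) k hz)]; ring
  obtain ⟨c1, hc1⟩ := hg.exists_bound_of_continuous (Gam_cont hs hsm hsm)
  obtain ⟨c2, hc2⟩ := hl.exists_bound_of_continuous (La_cont hs hsm)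
  refine ⟨max 1 (max c1 c2), f, hsm, hcs, fun z => f.nonneg, fun z => f.le_one,
    fun z hz => f.one_of_mem_closedBall hz, le_max_left _ _, fun z => ?_, fun z => ?_⟩
  · exact (le_abs_self _).trans ((hc1 z).trans ((le_max_left _ _).trans (le_max_right _ _)))
  · exact (hc2 z).trans ((le_max_right _ _).trans (le_max_right _ _))

lemma vol_contra {s E c₀ C : ℝ} (hE : (N₁ : ℝ) + (1 + s) * N₂ < E) (hc₀ : 0 < c₀)
    (F : ℝ → Pt N₁ N₂ → ℝ) (hi : ∀ R, 1 ≤ R → Integrable (F R)) (hn : ∀ R z, 1 ≤ R → 0 ≤ F R z)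
    (hlow : ∀ R z, 1 ≤ R → dl s R z ∈ Metric.closedBall (0 : Pt N₁ N₂) 1 → R ^ E * c₀ ≤ F R z)
    (hC : ∀ R, 1 ≤ R → ∫ z, F R z ≤ C) : False := by
  have key : ∀ R : ℝ, 1 ≤ R →
      c₀ * 2 ^ (N₁ + N₂) * R ^ (E - ((N₁ : ℝ) + (1 + s) * N₂)) ≤ C := by
    intro R hR
    have hR0 : 0 < R := by linarith
    set S : Set (Pt N₁ N₂) := Metric.closedBall (0 : Fin N₁ → ℝ) R⁻¹ ×ˢ
      Metric.closedBall (0 : Fin N₂ → ℝ) (R ^ (-(1 + s))) with hS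
    have hpos : 0 < R ^ (-(1 + s)) := Real.rpow_pos_of_pos hR0 _
    have hvol : (volume S).toReal = (2 * R⁻¹) ^ N₁ * (2 * R ^ (-(1 + s))) ^ N₂ := by
      rw [hS, Measure.volume_eq_prod, Measure.prod_prod,
        Real.volume_pi_closedBall _ (by positivity), Real.volume_pi_closedBall _ hpos.le,
        ENNReal.toReal_mul, ENNReal.toReal_ofReal (by positivity),
        ENNReal.toReal_ofReal (by positivity)]
      simp
    have hSc : IsCompact S :=
      (isCompact_closedBall _ _).prod (isCompact_closedBall _ _)
    have hfin : volume S ≠ ⊤ := hSc.measure_lt_top.ne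
    have hSm : MeasurableSet S := hSc.measurableSet
    have h1 : ∫ z in S, (R ^ E * c₀) ≤ ∫ z in S, F R z := by
      refine setIntegral_mono_on (by exact integrableOn_const hfin) (hi R hR).integrableOn hSm ?_
      intro z hz
      refine hlow R z hR ?_
      obtain ⟨hz1, hz2⟩ := hz
      rw [mem_closedBall_zero_iff] at hz1 hz2 ⊢
      rw [dl_apply, Prod.norm_mk, norm_smul, norm_smul]
      refine max_le ?_ ?_
      · rw [Real.norm_of_nonneg hR0.le]
        calc R * ‖z.1‖ ≤ R * R⁻¹ := by gcongr
          _ = 1 := mul_inv_cancel₀ hR0.ne'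
      · rw [Real.norm_of_nonneg (Real.rpow_nonneg hR0.le _)]
        calc R ^ (1 + s) * ‖z.2‖ ≤ R ^ (1 + s) * R ^ (-(1 + s)) := by gcongr
          _ = 1 := by rw [← Real.rpow_add hR0]; simp
    have h2 : ∫ z in S, F R z ≤ ∫ z, F R z :=
      setIntegral_le_integral (hi R hR) (Filter.Eventually.of_forall fun z => hn R z hR)
    rw [setIntegral_const, measureReal_def, hvol, smul_eq_mul] at h1
    have h3 : (2 * R⁻¹) ^ N₁ * (2 * R ^ (-(1 + s))) ^ N₂ * (R ^ E * c₀)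
        = c₀ * 2 ^ (N₁ + N₂) * R ^ (E - ((N₁ : ℝ) + (1 + s) * N₂)) := by
      rw [mul_pow, mul_pow, show E - ((N₁ : ℝ) + (1 + s) * N₂)
        = -1 * (N₁ : ℝ) + (-(1 + s)) * N₂ + E by ring, Real.rpow_add hR0, Real.rpow_add hR0,
        Real.rpow_mul_natCast hR0.le, Real.rpow_mul_natCast hR0.le, Real.rpow_neg_one]
      ring
    rw [h3] at h1
    exact h1.trans (h2.trans (hC R hR))
  have ht : Filter.Tendsto (fun R : ℝ => c₀ * 2 ^ (N₁ + N₂) *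
      R ^ (E - ((N₁ : ℝ) + (1 + s) * N₂))) Filter.atTop Filter.atTop :=
    (tendsto_rpow_atTop (by linarith)).const_mul_atTop (by positivity)
  obtain ⟨R, hR⟩ := ((ht.eventually_gt_atTop C).and (Filter.eventually_ge_atTop 1)).exists
  exact absurd (key R hR.2) (not_le.mpr hR.1)

/-! ### Elementary inequalities -/

lemma young_T {r ε : ℝ} (hr1 : r < 1) (hr0 : 0 ≤ r) (hε : 0 < ε) :
    ∃ C : ℝ, 0 ≤ C ∧ ∀ T : ℝ, 0 ≤ T → T ^ r ≤ ε * T + C := by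
  set K : ℝ := ε ^ (1 / (r - 1)) with hK
  have hKpos : 0 < K := Real.rpow_pos_of_pos hε _
  refine ⟨K ^ r, (Real.rpow_pos_of_pos hKpos _).le, fun T hT => ?_⟩
  rcases le_total T K with h | h
  · have := Real.rpow_le_rpow hT h hr0
    have h2 := mul_nonneg hε.le hT
    linarith
  · have hTpos : 0 < T := lt_of_lt_of_le hKpos h
    have h1 : T ^ r = T ^ (r - 1) * T := by
      rw [Real.rpow_sub_one hTpos.ne']; field_simp
    have h2 : T ^ (r - 1) ≤ K ^ (r - 1) :=
      Real.rpow_le_rpow_of_nonpos hKpos h (by linarith)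
    have h3 : K ^ (r - 1) = ε := by
      rw [hK, ← Real.rpow_mul hε.le, one_div, inv_mul_cancel₀ (by linarith), Real.rpow_one]
    rw [h3] at h2
    have h4 := mul_le_mul_of_nonneg_right h2 hT
    have h5 := (Real.rpow_pos_of_pos hKpos r).le
    linarith

lemma young_uv {a b P Q ε : ℝ} (ha : 0 ≤ a) (hb : 0 ≤ b) (hP : 0 < P) (hQ : 0 < Q)
    (hr : a / P + b / Q < 1) (hε : 0 < ε) {m M : ℕ} (hm : m ≠ 0)
    (hM : (M : ℝ) * (a / P + b / Q) ≤ m) :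
    ∃ C : ℝ, 0 ≤ C ∧ ∀ u v x : ℝ, 0 < u → 0 < v → 0 ≤ x → x ≤ 1 →
      u ^ a * v ^ b * x ^ m ≤ ε * ((u ^ P + v ^ Q) * x ^ M) + C := by
  have hr0 : 0 ≤ a / P + b / Q := by positivity
  obtain ⟨C, hC, h⟩ := young_T hr hr0 hε
  refine ⟨C, hC, fun u v x hu hv hx hx1 => ?_⟩
  set r := a / P + b / Q with hrdef
  set S := u ^ P + v ^ Q with hS
  have hu' : 0 < u ^ P := Real.rpow_pos_of_pos hu _
  have hv' : 0 < v ^ Q := Real.rpow_pos_of_pos hv _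
  have hSpos : 0 < S := by positivity
  have h1 : u ^ a ≤ S ^ (a / P) := by
    calc u ^ a = (u ^ P) ^ (a / P) := by
          rw [← Real.rpow_mul hu.le]; congr 1; field_simp
      _ ≤ S ^ (a / P) := Real.rpow_le_rpow hu'.le (by linarith) (by positivity)
  have h2 : v ^ b ≤ S ^ (b / Q) := by
    calc v ^ b = (v ^ Q) ^ (b / Q) := by
          rw [← Real.rpow_mul hv.le]; congr 1; field_simp
      _ ≤ S ^ (b / Q) := Real.rpow_le_rpow hv'.le (by linarith) (by positivity)
  have h3 : u ^ a * v ^ b ≤ S ^ r := by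
    rw [hrdef, Real.rpow_add hSpos]
    exact mul_le_mul h1 h2 (Real.rpow_nonneg hv.le _) (Real.rpow_nonneg hSpos.le _)
  have h4 : x ^ m ≤ (x ^ M) ^ r := by
    rcases hx.eq_or_lt with h0 | h0
    · rw [← h0, zero_pow hm]; positivity
    · rw [← Real.rpow_natCast x M, ← Real.rpow_mul h0.le, ← Real.rpow_natCast x m]
      exact Real.rpow_le_rpow_of_exponent_ge h0 hx1 hM
  calc u ^ a * v ^ b * x ^ m ≤ S ^ r * (x ^ M) ^ r :=
        mul_le_mul h3 h4 (by positivity) (Real.rpow_nonneg hSpos.le _)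
    _ = (S * x ^ M) ^ r := (Real.mul_rpow hSpos.le (by positivity)).symm
    _ ≤ _ := h _ (by positivity)

lemma int_le_of_null {F G N : Pt N₁ N₂ → ℝ} (hF : Integrable F) (hG : Integrable G)
    (hN : Integrable N) (hN0 : ∫ z, N z = 0) (h : ∀ z, F z ≤ G z + N z) :
    ∫ z, F z ≤ ∫ z, G z := by
  have h1 : ∫ z, F z ≤ ∫ z, (G z + N z) := integral_mono hF (hG.add hN) h
  rw [integral_add hG hN, hN0] at h1
  linarith

lemma Cut.integ {s C₀ : ℝ} {χ : Pt N₁ N₂ → ℝ} (hχ : Cut s C₀ χ) {F : Pt N₁ N₂ → ℝ}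
    (hF : Continuous F) {n : ℕ} (hn : n ≠ 0) : Integrable (fun z => F z * χ z ^ n) := by
  have hc : Continuous (fun z => F z * χ z ^ n) := hF.mul (hχ.sm.continuous.pow n)
  exact hc.integrable_of_hasCompactSupport (HasCompactSupport.intro hχ.cs fun z hz => by
    simp [image_eq_zero_of_notMem_tsupport hz, hn])

lemma Cut.cs_mul {s C₀ : ℝ} {χ : Pt N₁ N₂ → ℝ} (hχ : Cut s C₀ χ) (F : Pt N₁ N₂ → ℝ)
    {n : ℕ} (hn : n ≠ 0) : HasCompactSupport (fun z => F z * χ z ^ n) :=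
  HasCompactSupport.intro hχ.cs fun z hz => by
    simp [image_eq_zero_of_notMem_tsupport hz, hn]

lemma Cut.cs_pow {s C₀ : ℝ} {χ : Pt N₁ N₂ → ℝ} (hχ : Cut s C₀ χ)
    {n : ℕ} (hn : n ≠ 0) : HasCompactSupport (fun z => χ z ^ n) :=
  HasCompactSupport.intro hχ.cs fun z hz => by
    simp [image_eq_zero_of_notMem_tsupport hz, hn]

/-- Bounds for the Laplacian of powers of the cutoff. -/
lemma Cut.la_pow {s C₀ : ℝ} {χ : Pt N₁ N₂ → ℝ} (hχ : Cut s C₀ χ) (n : ℕ) (z : Pt N₁ N₂) :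
    |La s (fun z => χ z ^ (n + 2)) z| ≤ (n + 2) ^ 2 * C₀ * χ z ^ n := by
  rw [La_pow s hχ.sm]
  have hx := hχ.nn z
  have hx1 := hχ.le1 z
  have hg0 := Gam_nonneg s χ z
  have hg := hχ.gam z
  have hl := hχ.la z
  have hC := hχ.C1
  have hxn : 0 ≤ χ z ^ n := pow_nonneg hx n
  have e1 : |(n + 2 : ℝ) * χ z ^ (n + 1) * La s χ z| ≤ (n + 2) * C₀ * χ z ^ n := by
    rw [abs_mul, abs_of_nonneg (by positivity)]
    calc (n + 2 : ℝ) * χ z ^ (n + 1) * |La s χ z| ≤ (n + 2 : ℝ) * χ z ^ n * C₀ := by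
          have : χ z ^ (n + 1) ≤ χ z ^ n := pow_le_pow_of_le_one hx hx1 (Nat.le_succ n)
          gcongr
      _ = _ := by ring
  have e2 : |(n + 2 : ℝ) * (n + 1) * χ z ^ n * Gam s χ χ z| ≤ (n + 2) * (n + 1) * C₀ * χ z ^ n := by
    rw [abs_of_nonneg (by positivity)]
    calc (n + 2 : ℝ) * (n + 1) * χ z ^ n * Gam s χ χ z
        ≤ (n + 2 : ℝ) * (n + 1) * χ z ^ n * C₀ := by gcongr
      _ = _ := by ring
  calc _ ≤ _ := abs_add_le _ _
    _ ≤ (n + 2) * C₀ * χ z ^ n + (n + 2) * (n + 1) * C₀ * χ z ^ n := add_le_add e1 e2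
    _ = _ := by ring

lemma Cut.gam_sq {s C₀ : ℝ} {χ : Pt N₁ N₂ → ℝ} (hχ : Cut s C₀ χ) (u : Pt N₁ N₂ → ℝ)
    (z : Pt N₁ N₂) : Gam s u χ z ^ 2 ≤ C₀ * Gam s u u z :=
  (Gam_cs s u χ z).trans (by
    rw [mul_comm]
    exact mul_le_mul_of_nonneg_right (hχ.gam z) (Gam_nonneg s u z))

/-- The fourth order form of stability. -/
lemma Sys.stab4 {s p θ : ℝ} (hs : 0 ≤ s) (hp : 0 < p) {u v ξ ζ : Pt N₁ N₂ → ℝ}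
    (h : Sys s p θ u v ξ ζ) {φ : Pt N₁ N₂ → ℝ} (hφ : Sm φ) (hc : HasCompactSupport φ)
    {F G : Pt N₁ N₂ → ℝ} (hF : Integrable F) (hG : Integrable G)
    (hFφ : ∀ z, F z ≤ p * θ * (u z ^ (θ - 1) * φ z ^ 2))
    (hGφ : ∀ z, v z ^ (1 - p) * La s φ z ^ 2 ≤ G z) : ∫ z, F z ≤ ∫ z, G z := by
  have hσ : Sm (fun z => φ z / ξ z) := hφ.div h.hξ (fun z => (h.pξ z).ne')
  set σ : Pt N₁ N₂ → ℝ := fun z => φ z / ξ z with hσd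
  have hφe : φ = fun z => σ z * ξ z := by
    funext z; simp only [hσd]; rw [div_mul_cancel₀ _ (h.pξ z).ne']
  set f : Pt N₁ N₂ → ℝ := fun z => σ z * φ z with hfd
  have hf : Sm f := hσ.mul hφ
  have hfc : HasCompactSupport f := hc.mul_left
  obtain ⟨i1, e1⟩ := ibp hs h.hζ hf hfc
  obtain ⟨i2, e2⟩ := ibp' hs hf h.hζ hfc
  have i3 := (i2.sub i1).const_mul p
  refine int_le_of_null hF hG i3 ?_ ?_
  · rw [integral_const_mul, integral_sub' i2 i1, e1, e2]; simp
  intro z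
  refine (hFφ z).trans ?_
  refine le_trans ?_ (add_le_add_left (hGφ z) _)
  simp only [Pi.sub_apply]
  rw [Gam_comm s f ζ]
  have hLf : La s f z = 2 * σ z * La s φ z - σ z ^ 2 * La s ξ z + 2 * ξ z * Gam s σ σ z := by
    have a1 : La s φ z = σ z * La s ξ z + ξ z * La s σ z + 2 * Gam s σ ξ z := by
      conv_lhs => rw [hφe]
      exact La_mul s hσ h.hξ z
    have a2 : Gam s σ φ z = σ z * Gam s σ ξ z + ξ z * Gam s σ σ z := by
      conv_lhs => rw [hφe]
      exact Gam_mul s σ hσ h.hξ z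
    have a3 : φ z = σ z * ξ z := congrFun hφe z
    rw [hfd, La_mul s hσ hφ, a2]
    linear_combination La s σ z * a3 - σ z * a1
  have hv := h.pv z
  have hξz := h.pξ z
  have hζz := h.pζ z
  have a3 : φ z = σ z * ξ z := congrFun hφe z
  have hfz : f z = σ z ^ 2 * ξ z := by simp only [hfd]; rw [a3]; ring
  have hG0 := Gam_nonneg s σ z
  have k1 : θ * (u z ^ (θ - 1) * φ z ^ 2) ≤ - La s ζ z * f z := by
    have := mul_le_mul_of_nonneg_right (h.eζ z) (show 0 ≤ f z by rw [hfz]; positivity)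
    rw [hfz, a3] at *
    nlinarith
  have k2 : σ z ^ 2 * La s ξ z * ζ z ≤ - (p * v z ^ (p - 1) * ζ z ^ 2 * σ z ^ 2) := by
    have := mul_le_mul_of_nonneg_right (h.eξ z) (show 0 ≤ σ z ^ 2 * ζ z by positivity)
    nlinarith
  have k3 : 0 ≤ 2 * ξ z * Gam s σ σ z * ζ z := by positivity
  have hA : v z ^ (1 - p) * v z ^ (p - 1) = 1 := by
    rw [← Real.rpow_add hv]; simp
  have hA0 : 0 < v z ^ (1 - p) := Real.rpow_pos_of_pos hv _
  have hB0 : 0 < v z ^ (p - 1) := Real.rpow_pos_of_pos hv _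
  have k4 : 0 ≤ v z ^ (1 - p) * (La s φ z + p * v z ^ (p - 1) * ζ z * σ z) ^ 2 := by positivity
  have k5 : v z ^ (1 - p) * (La s φ z + p * v z ^ (p - 1) * ζ z * σ z) ^ 2
      = v z ^ (1 - p) * La s φ z ^ 2 + 2 * p * La s φ z * ζ z * σ z
        + p ^ 2 * v z ^ (p - 1) * ζ z ^ 2 * σ z ^ 2 := by
    linear_combination (2 * p * La s φ z * ζ z * σ z
      + p ^ 2 * v z ^ (p - 1) * ζ z ^ 2 * σ z ^ 2) * hA
  rw [hLf]
  have k1' := mul_le_mul_of_nonneg_left k1 hp.le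
  have k2' := mul_le_mul_of_nonneg_left k2 hp.le
  have k3' := mul_nonneg hp.le k3
  nlinarith

/-! ### Case A: `p ≤ 1` -/

lemma Sm.mul' {f g : Pt N₁ N₂ → ℝ} (hf : Sm f) (hg : Sm g) : Sm (fun z => f z * g z) :=
  ContDiff.mul hf hg

lemma Sm.pow' {f : Pt N₁ N₂ → ℝ} (hf : Sm f) (n : ℕ) : Sm (fun z => f z ^ n) :=
  ContDiff.pow hf n

lemma algA1 {A W u x a b Γ C₀ c ε X : ℝ} (hA : 0 ≤ A) (hε : 0 < ε)
    (ha : |a| ≤ c ^ 2 * C₀ * X) (hb : b ^ 2 ≤ C₀ * Γ) :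
    A * (u * a + (X * x ^ 2) * (-W) + 2 * (c * (X * x) * b)) ^ 2
      ≤ (1 + ε) * (A * W ^ 2 * (X ^ 2 * x ^ 4))
        + (1 + 1 / ε) * (8 * c ^ 2 * C₀ * (A * Γ * (X ^ 2 * x ^ 2))
          + 2 * c ^ 4 * C₀ ^ 2 * (A * u ^ 2 * X ^ 2)) := by
  have h1 : a ^ 2 ≤ (c ^ 2 * C₀ * X) ^ 2 := sq_le_sq' (by linarith [neg_abs_le a]) (le_trans (le_abs_self a) ha)
  have key : (u * a + (X * x ^ 2) * (-W) + 2 * (c * (X * x) * b)) ^ 2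
      ≤ (1 + ε) * (W ^ 2 * (X ^ 2 * x ^ 4)) + (1 + 1 / ε) * (8 * c ^ 2 * C₀ * (Γ * (X ^ 2 * x ^ 2))
          + 2 * c ^ 4 * C₀ ^ 2 * (u ^ 2 * X ^ 2)) := by
    set E := u * a + 2 * (c * (X * x) * b) with hE
    have e1 : E ^ 2 ≤ 8 * c ^ 2 * C₀ * (Γ * (X ^ 2 * x ^ 2)) + 2 * c ^ 4 * C₀ ^ 2 * (u ^ 2 * X ^ 2) := by
      have s1 := mul_le_mul_of_nonneg_left hb (show 0 ≤ 8 * c ^ 2 * (X ^ 2 * x ^ 2) by positivity)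
      have s2 := mul_le_mul_of_nonneg_left h1 (show 0 ≤ 2 * u ^ 2 by positivity)
      have s3 := sq_nonneg (u * a - 2 * (c * (X * x) * b))
      rw [hE]; nlinarith
    have e2 : (E - W * (X * x ^ 2)) ^ 2 ≤ (1 + ε) * (W * (X * x ^ 2)) ^ 2 + (1 + 1 / ε) * E ^ 2 := by
      have : 0 ≤ (1 / ε) * (ε * (W * (X * x ^ 2)) + E) ^ 2 := by positivity
      have h2 : (1 / ε) * (ε * (W * (X * x ^ 2)) + E) ^ 2
        = ε * (W * (X * x ^ 2)) ^ 2 + 2 * (W * (X * x ^ 2)) * E + (1 / ε) * E ^ 2 := by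
        field_simp; ring
      nlinarith
    have e3 := mul_le_mul_of_nonneg_left e1 (show 0 ≤ 1 + 1 / ε by positivity)
    have e4 : u * a + (X * x ^ 2) * (-W) + 2 * (c * (X * x) * b) = E - W * (X * x ^ 2) := by
      rw [hE]; ring
    rw [e4]
    nlinarith
  have := mul_le_mul_of_nonneg_left key hA
  refine this.trans (le_of_eq ?_)
  ring

lemma pow_ids (x : ℝ) (n : ℕ) : x ^ (n + 2) = x ^ n * x ^ 2 ∧ x ^ (n + 1) = x ^ n * x ∧
    x ^ (2 * n + 4) = (x ^ n) ^ 2 * x ^ 4 ∧ x ^ (2 * n + 2) = (x ^ n) ^ 2 * x ^ 2 ∧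
    x ^ (2 * n) = (x ^ n) ^ 2 ∧ x ^ (2 * n + 3) = (x ^ n) ^ 2 * x ^ 3 ∧
    x ^ (2 * n + 1) = (x ^ n) ^ 2 * x := by
  refine ⟨?_, ?_, ?_, ?_, ?_, ?_, ?_⟩ <;> ring

lemma caseA1 {s p θ C₀ : ℝ} (hs : 0 ≤ s) (hp : 0 < p) {χ : Pt N₁ N₂ → ℝ}
    (hχ : Cut s C₀ χ) {n : ℕ} (hn : n ≠ 0) {ε : ℝ} (hε : 0 < ε) :
    ∃ K : ℝ, 0 ≤ K ∧ ∀ u v ξ ζ : Pt N₁ N₂ → ℝ, Sys s p θ u v ξ ζ →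
      p * θ * ∫ z, u z ^ (θ + 1) * χ z ^ (2 * n + 4) ≤
        (1 + ε) * (∫ z, v z ^ (p + 1) * χ z ^ (2 * n + 4)) +
        K * ((∫ z, (v z ^ (1 - p) * Gam s u u z) * χ z ^ (2 * n + 2)) +
          ∫ z, (v z ^ (1 - p) * u z ^ 2) * χ z ^ (2 * n)) := by
  set c : ℝ := n + 2 with hc
  have hC1 := hχ.C1
  refine ⟨(1 + 1 / ε) * (8 * c ^ 2 * C₀ + 2 * c ^ 4 * C₀ ^ 2), by positivity, ?_⟩
  set K := (1 + 1 / ε) * (8 * c ^ 2 * C₀ + 2 * c ^ 4 * C₀ ^ 2) with hK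
  intro u v ξ ζ h
  have hA := h.hv.rpow h.pv (1 - p)
  have iU := hχ.integ (h.hu.rpow h.pu (θ + 1)).continuous (n := 2 * n + 4) (by omega)
  have iV := hχ.integ (h.hv.rpow h.pv (p + 1)).continuous (n := 2 * n + 4) (by omega)
  have iG : Integrable (fun z => (v z ^ (1 - p) * Gam s u u z) * χ z ^ (2 * n + 2)) :=
    hχ.integ (hA.continuous.mul (Gam_cont hs h.hu h.hu)) (n := 2 * n + 2) (by omega)
  have iH : Integrable (fun z => (v z ^ (1 - p) * u z ^ 2) * χ z ^ (2 * n)) :=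
    hχ.integ (hA.continuous.mul (h.hu.continuous.pow 2)) (n := 2 * n) (by omega)
  have key := h.stab4 hs hp (φ := fun z => u z * χ z ^ (n + 2)) (h.hu.mul' (hχ.sm.pow' _))
    (hχ.cs_mul u (by omega)) (iU.const_mul (p * θ))
    ((iV.const_mul (1 + ε)).add ((iG.add iH).const_mul K)) ?_ ?_
  · rw [integral_const_mul] at key
    refine key.trans (le_of_eq ?_)
    rw [integral_add' (iV.const_mul (1 + ε)) ((iG.add iH).const_mul K), integral_const_mul,
      integral_const_mul, integral_add' iG iH]
  · intro z
    have hu := h.pu z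
    have : u z ^ (θ + 1) = u z ^ (θ - 1) * u z ^ 2 := by
      rw [← Real.rpow_natCast, ← Real.rpow_add hu]; congr 1; push_cast; ring
    refine le_of_eq ?_
    simp only [this]; ring
  · intro z
    have hv := h.pv z
    rw [La_mul s h.hu (hχ.sm.pow' _), Gam_pow s u hχ.sm (n + 1) z, h.eu z]
    simp only [Pi.add_apply]
    have hA0 : 0 < v z ^ (1 - p) := Real.rpow_pos_of_pos hv _
    have hW : v z ^ (p + 1) = v z ^ (1 - p) * (v z ^ p) ^ 2 := by
      rw [← Real.rpow_natCast, ← Real.rpow_mul hv.le, ← Real.rpow_add hv]; congr 1; push_cast; ring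
    obtain ⟨q1, q2, q3, q4, q5, -, -⟩ := pow_ids (χ z) n
    have hg := Gam_nonneg s u z
    have := algA1 (W := v z ^ p) (u := u z) (x := χ z) (X := χ z ^ n) (c := c) hA0.le hε
      (hχ.la_pow n z) (hχ.gam_sq u z)
    rw [hW, q3, q4, q5, q1]
    have e : (((n + 1 : ℕ) : ℝ) + 1) = c := by push_cast; rw [hc]; ring
    rw [e, q2]
    refine this.trans ?_
    set S1 := v z ^ (1 - p) * Gam s u u z * ((χ z ^ n) ^ 2 * χ z ^ 2) with hS1
    set S2 := v z ^ (1 - p) * u z ^ 2 * (χ z ^ n) ^ 2 with hS2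
    have p1 : 0 ≤ S1 := by positivity
    have p2 : 0 ≤ S2 := by positivity
    have p3 : 0 ≤ 1 + 1 / ε := by positivity
    have g1 : 0 ≤ (1 + 1 / ε) * (8 * c ^ 2 * C₀) * S2 := by positivity
    have g2 : 0 ≤ (1 + 1 / ε) * (2 * c ^ 4 * C₀ ^ 2) * S1 := by positivity
    rw [hK]
    clear_value S1 S2
    linarith

lemma caseA2 {s p θ C₀ : ℝ} (hs : 0 ≤ s) {χ : Pt N₁ N₂ → ℝ}
    (hχ : Cut s C₀ χ) {n : ℕ} {ε : ℝ} (hε : 0 < ε) :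
    ∃ K : ℝ, 0 ≤ K ∧ ∀ u v ξ ζ : Pt N₁ N₂ → ℝ, Sys s p θ u v ξ ζ →
      ∫ z, v z ^ (p + 1) * χ z ^ (2 * n + 4) ≤ (∫ z, u z ^ (θ + 1) * χ z ^ (2 * n + 4)) +
        ε * (∫ z, v z ^ (p + 1) * χ z ^ (2 * n + 4)) +
        K * ((∫ z, (v z ^ (1 - p) * Gam s u u z) * χ z ^ (2 * n + 2)) +
          ∫ z, (u z * v z) * χ z ^ (2 * n + 2)) := by
  set M : ℝ := 2 * n + 4 with hM
  have hC1 := hχ.C1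
  have hMpos : 0 < M := by positivity
  refine ⟨M ^ 2 * C₀ / ε + M ^ 2 * C₀, by positivity, ?_⟩
  set K := M ^ 2 * C₀ / ε + M ^ 2 * C₀ with hK
  intro u v ξ ζ h
  have hA := h.hv.rpow h.pv (1 - p)
  have hρ : Sm (fun z => χ z ^ (2 * n + 4)) := hχ.sm.pow' _
  have iU := hχ.integ (h.hu.rpow h.pu (θ + 1)).continuous (n := 2 * n + 4) (by omega)
  have iV := hχ.integ (h.hv.rpow h.pv (p + 1)).continuous (n := 2 * n + 4) (by omega)
  have iG : Integrable (fun z => (v z ^ (1 - p) * Gam s u u z) * χ z ^ (2 * n + 2)) :=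
    hχ.integ (hA.continuous.mul (Gam_cont hs h.hu h.hu)) (n := 2 * n + 2) (by omega)
  have iL : Integrable (fun z => (u z * v z) * χ z ^ (2 * n + 2)) :=
    hχ.integ (h.hu.continuous.mul h.hv.continuous) (n := 2 * n + 2) (by omega)
  obtain ⟨i2, e2⟩ := ibp hs h.hu (h.hv.mul' hρ) (hχ.cs_mul v (by omega))
  obtain ⟨i3, e3⟩ := ibp hs h.hv (h.hu.mul' hρ) (hχ.cs_mul u (by omega))
  obtain ⟨i4, e4⟩ := ibp' hs hρ (h.hu.mul' h.hv) (hχ.cs_pow (by omega))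
  have key := int_le_of_null iV ((iU.add (iV.const_mul ε)).add ((iG.add iL).const_mul K))
    ((i3.sub i2).sub i4) ?_ ?_
  · refine key.trans (le_of_eq ?_)
    rw [integral_add' (iU.add (iV.const_mul ε)) ((iG.add iL).const_mul K),
      integral_add' iU (iV.const_mul ε), integral_const_mul,
      integral_const_mul, integral_add' iG iL]
  · rw [integral_sub' (i3.sub i2) i4, integral_sub' i3 i2, e2, e3, e4]; simp
  · intro z
    have hu := h.pu z
    have hv := h.pv z
    simp only [Pi.add_apply, Pi.sub_apply]
    rw [Gam_mul s u h.hv hρ, Gam_mul s v h.hu hρ, Gam_mul s _ h.hu h.hv, h.eu, h.ev,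
      Gam_comm s (fun z => χ z ^ (2 * n + 4)) v, Gam_comm s (fun z => χ z ^ (2 * n + 4)) u,
      Gam_comm s v u]
    have hb := Gam_pow s u hχ.sm (2 * n + 3) z
    have hl := hχ.la_pow (2 * n + 2) z
    have hA0 : 0 < v z ^ (1 - p) := Real.rpow_pos_of_pos hv _
    have hW : v z ^ (p + 1) = v z ^ (1 - p) * (v z ^ p) ^ 2 := by
      rw [← Real.rpow_natCast, ← Real.rpow_mul hv.le, ← Real.rpow_add hv]; congr 1; push_cast; ring
    have hvA : v z = v z ^ (1 - p) * v z ^ p := by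
      rw [← Real.rpow_add hv]; simp
    have hV : v z ^ (p + 1) = v z ^ p * v z := by
      rw [Real.rpow_add_one hv.ne']
    have hU : u z ^ (θ + 1) = u z ^ θ * u z := by
      rw [Real.rpow_add_one hu.ne']
    have e : (((2 * n + 3 : ℕ) : ℝ) + 1) = M := by push_cast; rw [hM]; ring
    have e' : (((2 * n + 2 : ℕ) : ℝ) + 2) = M := by push_cast; rw [hM]; ring
    rw [e] at hb; rw [e'] at hl
    have hb' : Gam s u (fun z => χ z ^ (2 * n + 4)) z = M * χ z ^ (2 * n + 3) * Gam s u χ z := hb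
    have hl2 : La s (fun z => χ z ^ (2 * n + 4)) z ≤ M ^ 2 * C₀ * χ z ^ (2 * n + 2) :=
      (le_abs_self _).trans hl
    have hL := mul_le_mul_of_nonneg_left hl2 (mul_pos hu hv).le
    obtain ⟨q1, q2, q3, q4, q5, q6, -⟩ := pow_ids (χ z) n
    have hg := hχ.gam_sq u z
    have hg0 := Gam_nonneg s u z
    -- the Young inequality
    have hY : 2 * v z * Gam s u (fun z => χ z ^ (2 * n + 4)) z ≤
        ε * (v z ^ (p + 1) * χ z ^ (2 * n + 4)) +
        M ^ 2 * C₀ / ε * (v z ^ (1 - p) * Gam s u u z * χ z ^ (2 * n + 2)) := by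
      rw [hb', hW, q3, q4, q6]
      nth_rewrite 1 [hvA]
      set A := v z ^ (1 - p)
      set W := v z ^ p
      set b := Gam s u χ z
      set X := χ z ^ n
      set x := χ z
      have t1 : 0 ≤ A * ((ε * (W * (X * x ^ 2)) - M * b * (X * x)) ^ 2 / ε) := by positivity
      have t2 : A * ((ε * (W * (X * x ^ 2)) - M * b * (X * x)) ^ 2 / ε) =
        ε * (A * W ^ 2 * (X ^ 2 * x ^ 4)) - 2 * (A * W) * (M * (X ^ 2 * x ^ 3) * b)
          + M ^ 2 / ε * (A * (X ^ 2 * x ^ 2)) * b ^ 2 := by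
        field_simp; ring
      have t3 := mul_le_mul_of_nonneg_left hg
        (show 0 ≤ M ^ 2 / ε * (A * (X ^ 2 * x ^ 2)) by positivity)
      have t4 : M ^ 2 / ε * (A * (X ^ 2 * x ^ 2)) * (C₀ * Gam s u u z) =
        M ^ 2 * C₀ / ε * (A * Gam s u u z * (X ^ 2 * x ^ 2)) := by ring
      linarith
    have p1 : 0 ≤ M ^ 2 * C₀ * (v z ^ (1 - p) * Gam s u u z * χ z ^ (2 * n + 2)) := by
      have := hχ.nn z
      positivity
    have p2 : 0 ≤ M ^ 2 * C₀ / ε * (u z * v z * χ z ^ (2 * n + 2)) := by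
      have := hχ.nn z
      positivity
    rw [hV] at hY ⊢
    rw [hU, hK]
    generalize M ^ 2 * C₀ / ε = Q at *
    generalize La s (fun z => χ z ^ (2 * n + 4)) z = q at *
    generalize Gam s u (fun z => χ z ^ (2 * n + 4)) z = q' at *
    linarith

lemma caseA3 {s p θ C₀ : ℝ} (hs : 0 ≤ s) (hp : 0 < p) (hp1 : p ≤ 1) {χ : Pt N₁ N₂ → ℝ}
    (hχ : Cut s C₀ χ) {n : ℕ} (hn : n ≠ 0) :
    ∃ K : ℝ, 0 ≤ K ∧ ∀ u v ξ ζ : Pt N₁ N₂ → ℝ, Sys s p θ u v ξ ζ →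
      ∫ z, (v z ^ (1 - p) * Gam s u u z) * χ z ^ (2 * n + 2) ≤
        2 * (∫ z, (u z * v z) * χ z ^ (2 * n + 2)) +
        K * ∫ z, (v z ^ (1 - p) * u z ^ 2) * χ z ^ (2 * n) := by
  set M : ℝ := 2 * n + 2 with hM
  have hC1 := hχ.C1
  have hMpos : 0 < M := by positivity
  refine ⟨5 * M ^ 2 * C₀, by positivity, ?_⟩
  intro u v ξ ζ h
  have hA := h.hv.rpow h.pv (1 - p)
  have hρ : Sm (fun z => χ z ^ (2 * n + 2)) := hχ.sm.pow' _
  have iG : Integrable (fun z => (v z ^ (1 - p) * Gam s u u z) * χ z ^ (2 * n + 2)) :=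
    hχ.integ (hA.continuous.mul (Gam_cont hs h.hu h.hu)) (n := 2 * n + 2) (by omega)
  have iL : Integrable (fun z => (u z * v z) * χ z ^ (2 * n + 2)) :=
    hχ.integ (h.hu.continuous.mul h.hv.continuous) (n := 2 * n + 2) (by omega)
  have iH : Integrable (fun z => (v z ^ (1 - p) * u z ^ 2) * χ z ^ (2 * n)) :=
    hχ.integ (hA.continuous.mul (h.hu.continuous.pow 2)) (n := 2 * n) (by omega)
  obtain ⟨i5, e5⟩ := ibp hs h.hu ((h.hu.mul' hA).mul' hρ) (hχ.cs_mul _ (by omega))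
  obtain ⟨i6, e6⟩ := ibp hs hA ((h.hu.mul' h.hu).mul' hρ) (hχ.cs_mul _ (by omega))
  obtain ⟨i7, e7⟩ := ibp' hs hρ (hA.mul' (h.hu.mul' h.hu)) (hχ.cs_pow (by omega))
  have key := int_le_of_null iG ((iL.const_mul 2).add (iH.const_mul (5 * M ^ 2 * C₀)))
    (((i5.const_mul 2).sub i6).add i7) ?_ ?_
  · refine key.trans (le_of_eq ?_)
    rw [integral_add' (iL.const_mul 2) (iH.const_mul (5 * M ^ 2 * C₀)), integral_const_mul,
      integral_const_mul]
  · rw [integral_add' ((i5.const_mul 2).sub i6) i7, integral_sub' (i5.const_mul 2) i6,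
      integral_const_mul, e5, e6, e7]; simp
  · intro z
    have hu := h.pu z
    have hv := h.pv z
    simp only [Pi.add_apply, Pi.sub_apply]
    have hLA : La s (fun z => v z ^ (1 - p)) z ≤ 0 := by
      rw [La_rpow s h.hv h.pv, h.ev]
      have h1 : 0 ≤ (1 - p) * v z ^ (1 - p - 1) * u z ^ θ :=
        mul_nonneg (mul_nonneg (by linarith) (Real.rpow_nonneg hv.le _)) (Real.rpow_nonneg hu.le _)
      have h2 : 0 ≤ (1 - p) * p * v z ^ (1 - p - 1 - 1) * Gam s v v z :=
        mul_nonneg (mul_nonneg (mul_nonneg (by linarith) hp.le) (Real.rpow_nonneg hv.le _))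
          (Gam_nonneg _ _ _)
      nlinarith
    have hvA : v z ^ (1 - p) * v z ^ p = v z := by
      rw [← Real.rpow_add hv]; simp
    have hb := Gam_pow s u hχ.sm (2 * n + 1) z
    have hl := hχ.la_pow (2 * n) z
    have e : (((2 * n + 1 : ℕ) : ℝ) + 1) = M := by push_cast; rw [hM]; ring
    have e' : (((2 * n : ℕ) : ℝ) + 2) = M := by push_cast; rw [hM]
    rw [e] at hb; rw [e'] at hl
    have hb' : Gam s u (fun z => χ z ^ (2 * n + 2)) z = M * χ z ^ (2 * n + 1) * Gam s u χ z := hb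
    have hl2 : -La s (fun z => χ z ^ (2 * n + 2)) z ≤ M ^ 2 * C₀ * χ z ^ (2 * n) :=
      (neg_le_abs _).trans hl
    have hA0 : 0 < v z ^ (1 - p) := Real.rpow_pos_of_pos hv _
    have hL := mul_le_mul_of_nonneg_left hl2 (mul_pos hA0 (pow_pos hu 2)).le
    obtain ⟨q1, q2, q3, q4, q5, q6, q7⟩ := pow_ids (χ z) n
    have hg := hχ.gam_sq u z
    have hρ0 : 0 ≤ χ z ^ (2 * n + 2) := pow_nonneg (hχ.nn z) _
    have hLAu := mul_nonneg (mul_nonneg (neg_nonneg.2 hLA) (pow_pos hu 2).le) hρ0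
    have hid : (v z ^ (1 - p) * Gam s u u z) * χ z ^ (2 * n + 2) =
      (2 * (Gam s u (fun z => (u z * v z ^ (1 - p)) * χ z ^ (2 * n + 2)) z
          + La s u z * ((u z * v z ^ (1 - p)) * χ z ^ (2 * n + 2)))
        - (Gam s (fun z => v z ^ (1 - p)) (fun z => (u z * u z) * χ z ^ (2 * n + 2)) z
          + La s (fun z => v z ^ (1 - p)) z * ((u z * u z) * χ z ^ (2 * n + 2)))
        + (Gam s (fun z => χ z ^ (2 * n + 2)) (fun z => v z ^ (1 - p) * (u z * u z)) z
          + La s (fun z => χ z ^ (2 * n + 2)) z * (v z ^ (1 - p) * (u z * u z))))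
      - v z ^ (1 - p) * Gam s u u z * χ z ^ (2 * n + 2)
      - 4 * u z * v z ^ (1 - p) * Gam s u (fun z => χ z ^ (2 * n + 2)) z
      + 2 * (u z * v z * χ z ^ (2 * n + 2))
      + La s (fun z => v z ^ (1 - p)) z * u z ^ 2 * χ z ^ (2 * n + 2)
      - La s (fun z => χ z ^ (2 * n + 2)) z * (v z ^ (1 - p) * u z ^ 2) := by
      rw [Gam_mul s u (h.hu.mul' hA) hρ, Gam_mul s u h.hu hA,
        Gam_mul s _ (h.hu.mul' h.hu) hρ, Gam_mul s _ h.hu h.hu, Gam_mul s _ hA (h.hu.mul' h.hu),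
        Gam_mul s _ h.hu h.hu, h.eu,
        Gam_comm s (fun z => χ z ^ (2 * n + 2)) (fun z => v z ^ (1 - p)),
        Gam_comm s (fun z => χ z ^ (2 * n + 2)) u, Gam_comm s (fun z => v z ^ (1 - p)) u]
      linear_combination (2 * u z * χ z ^ (2 * n + 2)) * hvA
    have hY : - (4 * u z * v z ^ (1 - p) * Gam s u (fun z => χ z ^ (2 * n + 2)) z) ≤
        v z ^ (1 - p) * Gam s u u z * χ z ^ (2 * n + 2)
        + 4 * M ^ 2 * C₀ * (v z ^ (1 - p) * u z ^ 2 * χ z ^ (2 * n)) := by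
      rw [hb', q4, q5, q7]
      set A := v z ^ (1 - p)
      set b := Gam s u χ z
      set X := χ z ^ n
      set x := χ z
      have hC0 : 0 < C₀ := by linarith
      have t1 : 0 ≤ A * ((b * (X * x) + 2 * C₀ * M * u z * X) ^ 2 / C₀) := by positivity
      have t2 : A * ((b * (X * x) + 2 * C₀ * M * u z * X) ^ 2 / C₀) =
        A * (X ^ 2 * x ^ 2) / C₀ * b ^ 2 + 4 * u z * A * (M * (X ^ 2 * x) * b)
         + 4 * M ^ 2 * C₀ * (A * u z ^ 2 * X ^ 2) := by
        field_simp; ring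
      have t3 := mul_le_mul_of_nonneg_left hg
        (show 0 ≤ A * (X ^ 2 * x ^ 2) / C₀ by positivity)
      have t4 : A * (X ^ 2 * x ^ 2) / C₀ * (C₀ * Gam s u u z) = A * Gam s u u z * (X ^ 2 * x ^ 2) := by
        field_simp
      linarith
    linarith

lemma young_int {s C₀ : ℝ} {χ : Pt N₁ N₂ → ℝ} (hχ : Cut s C₀ χ)
    {a b P Q ε : ℝ} (ha : 0 ≤ a) (hb : 0 ≤ b) (hP : 0 < P) (hQ : 0 < Q)
    (hr : a / P + b / Q < 1) (hε : 0 < ε) {m M : ℕ} (hm : m ≠ 0)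
    (hM : (M : ℝ) * (a / P + b / Q) ≤ m) :
    ∃ C : ℝ, 0 ≤ C ∧ ∀ u v : Pt N₁ N₂ → ℝ, Sm u → Sm v → (∀ z, 0 < u z) → (∀ z, 0 < v z) →
      ∫ z, (u z ^ a * v z ^ b) * χ z ^ (m + 1) ≤
        ε * ((∫ z, u z ^ P * χ z ^ (M + 1)) + ∫ z, v z ^ Q * χ z ^ (M + 1)) + C := by
  obtain ⟨C, hC, hy⟩ := young_uv ha hb hP hQ hr hε hm hM
  have iχ := hχ.integ (F := fun _ => C) continuous_const (n := 1) one_ne_zero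
  refine ⟨∫ z, C * χ z ^ 1, integral_nonneg fun z => mul_nonneg hC (pow_nonneg (hχ.nn z) _), ?_⟩
  intro u v hu hv pu pv
  have i1 : Integrable (fun z => (u z ^ a * v z ^ b) * χ z ^ (m + 1)) :=
    hχ.integ ((hu.rpow pu a).continuous.mul (hv.rpow pv b).continuous) (by omega)
  have i2 := hχ.integ (hu.rpow pu P).continuous (n := M + 1) (by omega)
  have i3 := hχ.integ (hv.rpow pv Q).continuous (n := M + 1) (by omega)
  have i4 : Integrable (fun z => ε * (u z ^ P * χ z ^ (M + 1) + v z ^ Q * χ z ^ (M + 1))) :=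
    (i2.add i3).const_mul ε
  rw [← integral_add i2 i3, ← integral_const_mul, ← integral_add i4 iχ]
  refine integral_mono i1 (i4.add iχ) fun z => ?_
  have h1 := mul_le_mul_of_nonneg_right (hy (u z) (v z) (χ z) (pu z) (pv z) (hχ.nn z) (hχ.le1 z))
    (hχ.nn z)
  calc _ = u z ^ a * v z ^ b * χ z ^ m * χ z := by ring
    _ ≤ _ := h1
    _ = _ := by ring

/-- Blow-down argument: a uniform local bound is contradictory. -/
lemma blowdown {s p θ C₀ : ℝ} (hs : 0 ≤ s) {χ : Pt N₁ N₂ → ℝ} (hχ : Cut s C₀ χ)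
    {α β a b C : ℝ} {M : ℕ} (hM : M ≠ 0) (h1 : β * p = α + 2) (h2 : α * θ = β + 2)
    (hE : (N₁ : ℝ) + (1 + s) * N₂ < α * a + β * b)
    (hb : ∀ u v ξ ζ : Pt N₁ N₂ → ℝ, Sys s p θ u v ξ ζ →
      ∫ z, (u z ^ a * v z ^ b) * χ z ^ M ≤ C)
    {u v ξ ζ : Pt N₁ N₂ → ℝ} (h : Sys s p θ u v ξ ζ) : False := by
  have hcont : Continuous (fun z => u z ^ a * v z ^ b) :=
    (h.hu.rpow h.pu a).continuous.mul (h.hv.rpow h.pv b).continuous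
  obtain ⟨z₀, -, hz₀⟩ := (isCompact_closedBall (0 : Pt N₁ N₂) 1).exists_isMinOn
    ⟨0, by simp⟩ hcont.continuousOn
  have hc₀ : 0 < u z₀ ^ a * v z₀ ^ b :=
    mul_pos (Real.rpow_pos_of_pos (h.pu _) _) (Real.rpow_pos_of_pos (h.pv _) _)
  have hF : ∀ R : ℝ, 1 ≤ R → ∀ z, (R ^ α * u (dl s R z)) ^ a * (R ^ β * v (dl s R z)) ^ b
      = R ^ (α * a + β * b) * (u (dl s R z) ^ a * v (dl s R z) ^ b) := by
    intro R hR z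
    have hR0 : 0 < R := by linarith
    rw [Real.mul_rpow (Real.rpow_nonneg hR0.le _) (h.pu _).le,
      Real.mul_rpow (Real.rpow_nonneg hR0.le _) (h.pv _).le, ← Real.rpow_mul hR0.le,
      ← Real.rpow_mul hR0.le, Real.rpow_add hR0]
    ring
  have hsys : ∀ R : ℝ, 1 ≤ R → _ := fun R hR => h.scale h1 h2 (show 0 < R by linarith)
  refine vol_contra (C := C) hE hc₀
    (fun R z => ((R ^ α * u (dl s R z)) ^ a * (R ^ β * v (dl s R z)) ^ b) * χ z ^ M)
    (fun R hR => ?_) (fun R z hR => ?_) (fun R z hR hz => ?_) (fun R hR => hb _ _ _ _ (hsys R hR))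
  · have h' := hsys R hR
    exact hχ.integ ((h'.hu.rpow h'.pu a).continuous.mul (h'.hv.rpow h'.pv b).continuous) hM
  · have h' := hsys R hR
    exact mul_nonneg (mul_nonneg (Real.rpow_nonneg (h'.pu z).le _)
      (Real.rpow_nonneg (h'.pv z).le _)) (pow_nonneg (hχ.nn z) _)
  · have hR0 : 0 < R := by linarith
    have hz1 : z ∈ Metric.closedBall (0 : Pt N₁ N₂) 1 := by
      rw [mem_closedBall_zero_iff] at hz ⊢
      rw [dl_apply, Prod.norm_def, max_le_iff] at hz
      obtain ⟨ha, hb⟩ := hz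
      simp only [norm_smul, Real.norm_eq_abs] at ha hb
      rw [abs_of_pos hR0] at ha
      rw [abs_of_pos (Real.rpow_pos_of_pos hR0 _)] at hb
      have hR1 : 1 ≤ R ^ (1 + s) := Real.one_le_rpow hR (by linarith)
      rw [Prod.norm_def, max_le_iff]
      constructor
      · nlinarith [norm_nonneg z.1]
      · nlinarith [norm_nonneg z.2]
    rw [hF R hR, hχ.one z hz1, one_pow, mul_one]
    exact mul_le_mul_of_nonneg_left (hz₀ hz) (Real.rpow_nonneg hR0.le _)

lemma algA {d q ε U V G H L K₁ K₂ K₃ : ℝ} (hd : 0 < d) (hq : q = 1 + d)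
    (hε : ε = d / (2 * (1 + q)))
    (hK₁ : 0 ≤ K₁) (hK₂ : 0 ≤ K₂) (hK₃ : 0 ≤ K₃) (hG : 0 ≤ G) (hH : 0 ≤ H) (hL : 0 ≤ L) (hU : 0 ≤ U) (hV : 0 ≤ V)
    (h1 : q * U ≤ (1 + ε) * V + K₁ * (G + H)) (h2 : V ≤ U + ε * V + K₂ * (G + L))
    (h3 : G ≤ 2 * L + K₃ * H) :
    U + V ≤ (3 * (2 / d) * (2 * K₂ + K₁) * (3 + K₃) + 2 * K₂ * (3 + K₃)) * (L + H) := by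
  have hq0 : 0 < q := by linarith
  have hε0 : 0 < ε := by rw [hε]; positivity
  have e1 : ε * (1 + q) = d / 2 := by rw [hε]; field_simp
  have hε1 : ε < 1 / 2 := by nlinarith
  set T := (3 + K₃) * (L + H) with hT
  have g1 : G + L ≤ T := by nlinarith [mul_nonneg hK₃ hL]
  have g2 : G + H ≤ T := by nlinarith [mul_nonneg hK₃ hL]
  have hT0 : 0 ≤ T := by positivity
  have a1 := mul_le_mul_of_nonneg_left g1 hK₂
  have a2 := mul_le_mul_of_nonneg_left g2 hK₁
  have m1 : q * U ≤ (1 + ε) * V + K₁ * T := by linarith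
  have m2 : (1 - ε) * V ≤ U + K₂ * T := by linarith
  have m3 := mul_le_mul_of_nonneg_left m1 (show 0 ≤ 1 - ε by linarith)
  have m4 := mul_le_mul_of_nonneg_left m2 (show 0 ≤ 1 + ε by linarith)
  have m5 : d / 2 * U ≤ (2 * K₂ + K₁) * T := by
    have b1 : 0 ≤ ε * (K₁ * T) := by positivity
    have b2 : 0 ≤ (1 - ε) * (K₂ * T) := mul_nonneg (by linarith) (by positivity)
    have b3 : d / 2 * U = (1 - ε) * (q * U) - (1 + ε) * U := by
      have : d / 2 = (1 - ε) * q - (1 + ε) := by linarith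
      rw [this]; ring
    rw [b3]
    nlinarith
  have m6 : U ≤ 2 / d * (2 * K₂ + K₁) * T := by
    have := mul_le_mul_of_nonneg_left m5 (show 0 ≤ 2 / d by positivity)
    have e : 2 / d * (d / 2 * U) = U := by field_simp
    rw [e] at this
    linarith
  have m7 : V ≤ 2 * U + 2 * K₂ * T := by
    have : 1 / 2 * V ≤ (1 - ε) * V := mul_le_mul_of_nonneg_right (by linarith) hV
    linarith
  have : (3 * (2 / d) * (2 * K₂ + K₁) * (3 + K₃) + 2 * K₂ * (3 + K₃)) * (L + H)
      = 3 * (2 / d * (2 * K₂ + K₁) * T) + 2 * K₂ * T := by rw [hT]; ring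
  rw [this]
  linarith

lemma caseA_bound {s p θ C₀ : ℝ} (hs : 0 ≤ s) (hp : 0 < p) (hθ : 0 < θ) (hp1 : p ≤ 1)
    (hpθ : 1 < p * θ) {χ : Pt N₁ N₂ → ℝ} (hχ : Cut s C₀ χ) :
    ∃ (n : ℕ) (C : ℝ), ∀ u v ξ ζ : Pt N₁ N₂ → ℝ, Sys s p θ u v ξ ζ →
      ∫ z, u z ^ (θ + 1) * χ z ^ (2 * n + 4) ≤ C := by
  have hr1 : 1 / (θ + 1) + 1 / (p + 1) < 1 := by
    rw [div_add_div _ _ (by positivity) (by positivity), div_lt_one (by positivity)]; nlinarith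
  have hr2 : 2 / (θ + 1) + (1 - p) / (p + 1) < 1 := by
    rw [div_add_div _ _ (by positivity) (by positivity), div_lt_one (by positivity)]; nlinarith
  obtain ⟨k, hk⟩ : ∃ k : ℕ, ((2 * k + 5 : ℕ) : ℝ) * (1 / (θ + 1) + 1 / (p + 1)) ≤ ((2 * k + 1 : ℕ) : ℝ) ∧
      ((2 * k + 5 : ℕ) : ℝ) * (2 / (θ + 1) + (1 - p) / (p + 1)) ≤ ((2 * k + 1 : ℕ) : ℝ) := by
    generalize 1 / (θ + 1) + 1 / (p + 1) = r1 at hr1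
    generalize 2 / (θ + 1) + (1 - p) / (p + 1) = r2 at hr2
    obtain ⟨k1, hk1⟩ := exists_nat_gt (4 / (2 * (1 - r1)) + 4 / (2 * (1 - r2)))
    have b1 : 0 < 4 / (2 * (1 - r1)) := div_pos (by norm_num) (by linarith)
    have b2 : 0 < 4 / (2 * (1 - r2)) := div_pos (by norm_num) (by linarith)
    have c1 : 4 / (2 * (1 - r1)) < k1 := by linarith
    have c2 : 4 / (2 * (1 - r2)) < k1 := by linarith
    rw [div_lt_iff₀ (by linarith)] at c1 c2
    refine ⟨k1, ?_, ?_⟩ <;> push_cast <;> nlinarith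
  set n := k + 1 with hn
  set d := p * θ - 1 with hd
  have hd0 : 0 < d := by linarith
  set ε := d / (2 * (1 + p * θ)) with hε
  have hε0 : 0 < ε := by positivity
  obtain ⟨K₁, hK₁, H1⟩ := caseA1 (θ := θ) hs hp hχ (n := n) (by omega) hε0
  obtain ⟨K₂, hK₂, H2⟩ := caseA2 (p := p) (θ := θ) hs hχ (n := n) hε0
  obtain ⟨K₃, hK₃, H3⟩ := caseA3 (θ := θ) hs hp hp1 hχ (n := n) (by omega)
  set K := 3 * (2 / d) * (2 * K₂ + K₁) * (3 + K₃) + 2 * K₂ * (3 + K₃) with hK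
  have hK0 : 0 ≤ K := by positivity
  set δ := 1 / (4 * (K + 1)) with hδ
  have hδ0 : 0 < δ := by positivity
  obtain ⟨C₁, hC₁, Y1⟩ := young_int hχ (a := 1) (b := 1) (P := θ + 1) (Q := p + 1) zero_le_one
    zero_le_one (by linarith) (by linarith) hr1 hδ0 (m := 2 * k + 3) (M := 2 * k + 5) (by omega)
    (hk.1.trans (by push_cast; linarith))
  obtain ⟨C₂, hC₂, Y2⟩ := young_int hχ (a := 2) (b := 1 - p) (P := θ + 1) (Q := p + 1) zero_le_two
    (by linarith) (by linarith) (by linarith) hr2 hδ0 (m := 2 * k + 1) (M := 2 * k + 5) (by omega)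
    hk.2
  refine ⟨n, 2 * K * (C₁ + C₂), fun u v ξ ζ h => ?_⟩
  have h1 := H1 u v ξ ζ h
  have h2 := H2 u v ξ ζ h
  have h3 := H3 u v ξ ζ h
  have y1 := Y1 u v h.hu h.hv h.pu h.pv
  have y2 := Y2 u v h.hu h.hv h.pu h.pv
  simp only [Real.rpow_one, Real.rpow_two] at y1 y2
  rw [show 2 * k + 3 + 1 = 2 * n + 2 by omega, show 2 * k + 5 + 1 = 2 * n + 4 by omega] at y1
  rw [show 2 * k + 1 + 1 = 2 * n by omega, show 2 * k + 5 + 1 = 2 * n + 4 by omega] at y2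
  have e : (∫ z, (u z ^ 2 * v z ^ (1 - p)) * χ z ^ (2 * n))
      = ∫ z, (v z ^ (1 - p) * u z ^ 2) * χ z ^ (2 * n) := by
    congr 1; funext z; ring
  rw [e] at y2
  have nU : 0 ≤ ∫ z, u z ^ (θ + 1) * χ z ^ (2 * n + 4) := integral_nonneg fun z =>
    mul_nonneg (Real.rpow_nonneg (h.pu z).le _) (pow_nonneg (hχ.nn z) _)
  have nV : 0 ≤ ∫ z, v z ^ (p + 1) * χ z ^ (2 * n + 4) := integral_nonneg fun z =>
    mul_nonneg (Real.rpow_nonneg (h.pv z).le _) (pow_nonneg (hχ.nn z) _)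
  have nG : 0 ≤ ∫ z, (v z ^ (1 - p) * Gam s u u z) * χ z ^ (2 * n + 2) := integral_nonneg fun z =>
    mul_nonneg (mul_nonneg (Real.rpow_nonneg (h.pv z).le _) (Gam_nonneg _ _ _))
      (pow_nonneg (hχ.nn z) _)
  have nL : 0 ≤ ∫ z, (u z * v z) * χ z ^ (2 * n + 2) := integral_nonneg fun z =>
    mul_nonneg (mul_nonneg (h.pu z).le (h.pv z).le) (pow_nonneg (hχ.nn z) _)
  have nH : 0 ≤ ∫ z, (v z ^ (1 - p) * u z ^ 2) * χ z ^ (2 * n) := integral_nonneg fun z =>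
    mul_nonneg (mul_nonneg (Real.rpow_nonneg (h.pv z).le _) (sq_nonneg _))
      (pow_nonneg (hχ.nn z) _)
  have := algA hd0 (show p * θ = 1 + d by rw [hd]; ring) hε hK₁ hK₂ hK₃ nG nH nL nU nV h1 h2 h3
  rw [← hK] at this
  generalize (∫ z, u z ^ (θ + 1) * χ z ^ (2 * n + 4)) = U at *
  generalize (∫ z, v z ^ (p + 1) * χ z ^ (2 * n + 4)) = V at *
  generalize (∫ z, (u z * v z) * χ z ^ (2 * n + 2)) = L at *
  generalize (∫ z, (v z ^ (1 - p) * u z ^ 2) * χ z ^ (2 * n)) = H at *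
  have f1 := mul_le_mul_of_nonneg_left (add_le_add y1 y2) hK0
  have f2 : K * (2 * δ) ≤ 1 / 2 := by
    rw [hδ]
    have : K * (2 * (1 / (4 * (K + 1)))) = 1 / 2 * (K / (K + 1)) := by field_simp; ring
    rw [this]
    have : K / (K + 1) ≤ 1 := by rw [div_le_one (by linarith)]; linarith
    linarith
  have f3 := mul_le_mul_of_nonneg_right f2 (add_nonneg nU nV)
  nlinarith

lemma caseA {s p θ α β : ℝ} (hs : 0 ≤ s) (hp : 0 < p) (hθ : 0 < θ) (hp1 : p ≤ 1)
    (hpθ : 1 < p * θ) (h1 : β * p = α + 2) (h2 : α * θ = β + 2)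
    (hdim : (N₁ : ℝ) + (1 + s) * N₂ < 2 + α + β)
    {u v ξ ζ : Pt N₁ N₂ → ℝ} (h : Sys s p θ u v ξ ζ) : False := by
  obtain ⟨C₀, χ, hχ⟩ := exists_cut (N₁ := N₁) (N₂ := N₂) hs
  obtain ⟨n, C, hC⟩ := caseA_bound hs hp hθ hp1 hpθ hχ
  refine blowdown (a := θ + 1) (b := 0) (C := C) (M := 2 * n + 4) hs hχ (by omega) h1 h2 (by linarith) ?_ h
  intro u v ξ ζ h
  simpa using hC u v ξ ζ h

/-! ### Case B: `p ≥ θ > 1` -/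

/-- A Keller–Osserman type bound by the maximum principle. -/
lemma max_bound {s C₀ c₀ q : ℝ} {χ : Pt N₁ N₂ → ℝ} (hχ : Cut s C₀ χ) (hc₀ : 0 < c₀)
    (hq : 0 < q) {j : ℕ} (hj : 2 ≤ ((j + 2 : ℕ) : ℝ) * q) {w : Pt N₁ N₂ → ℝ} (hw : Sm w)
    (hL : ∀ z, 0 < w z → c₀ * (w z ^ q * w z) ≤ La s w z) (z : Pt N₁ N₂) :
    χ z ^ (j + 2) * w z ≤ (3 * (j + 2) ^ 2 * C₀ / c₀) ^ (1 / q) := by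
  have hC1 := hχ.C1
  have hκ : Sm (fun z => χ z ^ (j + 2)) := hχ.sm.pow' _
  have hG : Sm (fun z => χ z ^ (j + 2) * w z) := hκ.mul' hw
  have hGc : HasCompactSupport (fun z => χ z ^ (j + 2) * w z) :=
    (hχ.cs_pow (by omega)).mul_right
  obtain ⟨z₀, hz₀⟩ := hG.continuous.exists_forall_ge_of_hasCompactSupport hGc
  refine (hz₀ z).trans ?_
  have hB : 0 ≤ 3 * ((j : ℝ) + 2) ^ 2 * C₀ / c₀ := by positivity
  by_cases hm : χ z₀ ^ (j + 2) * w z₀ ≤ 0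
  · exact hm.trans (Real.rpow_nonneg hB _)
  push Not at hm
  have hx0 := hχ.nn z₀
  have hxp : 0 < χ z₀ := by
    rcases hx0.eq_or_lt with h | h
    · rw [← h] at hm; simp at hm
    · exact h
  have hwp : 0 < w z₀ := by
    by_contra h
    push Not at h
    have := mul_nonpos_of_nonneg_of_nonpos (pow_nonneg hx0 (j + 2)) h
    linarith
  have hLa : La s (fun z => χ z ^ (j + 2) * w z) z₀ ≤ 0 := by
    unfold La
    exact Finset.sum_nonpos fun k _ =>
      mul_nonpos_of_nonneg_of_nonpos (wt_nonneg s k z₀) (max_cond hG hz₀ k).2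
  have hGa : Gam s χ (fun z => χ z ^ (j + 2) * w z) z₀ = 0 := by
    unfold Gam
    exact Finset.sum_eq_zero fun k _ => by rw [(max_cond hG hz₀ k).1]; ring
  rw [La_mul s hκ hw, Gam_comm s _ w, Gam_pow s w hχ.sm (j + 1), Gam_comm s w χ] at hLa
  rw [Gam_mul s χ hκ hw, Gam_pow s χ hχ.sm (j + 1)] at hGa
  have hl := (neg_le_abs _).trans (hχ.la_pow j z₀)
  have hg := hχ.gam z₀
  have hw1 := hL z₀ hwp
  set x := χ z₀ with hx
  set W := w z₀ with hW
  set g := Gam s χ w z₀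
  set γ := Gam s χ χ z₀
  have hxj : 0 < x ^ j := pow_pos hxp j
  have e1 : x * g = -((j + 2) * W * γ) := by
    have : x ^ (j + 1) * (x * g + (j + 2) * W * γ) = 0 := by
      rw [← hGa]; push_cast; ring
    rcases mul_eq_zero.1 this with h | h
    · exact absurd h (pow_pos hxp _).ne'
    · linarith
  have e2 : x ^ j * (x ^ 2 * La s w z₀) ≤ x ^ j * (3 * (j + 2) ^ 2 * C₀ * W) := by
    have t1 := mul_le_mul_of_nonneg_left hl hwp.le
    have t2 := mul_le_mul_of_nonneg_left hg (show 0 ≤ 2 * ((j : ℝ) + 2) ^ 2 * W * x ^ j by positivity)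
    have t3 : 2 * ((((j + 1 : ℕ) : ℝ) + 1) * x ^ (j + 1) * g) = -(2 * ((j : ℝ) + 2) ^ 2 * W * x ^ j * γ) := by
      push_cast
      linear_combination 2 * ((j : ℝ) + 2) * x ^ j * e1
    rw [t3] at hLa
    have t4 : x ^ j * (x ^ 2 * La s w z₀) = x ^ (j + 2) * La s w z₀ := by ring
    rw [t4]
    linarith
  have e3 := le_of_mul_le_mul_left e2 hxj
  have e4 : c₀ * (x ^ 2 * W ^ q) ≤ 3 * (j + 2) ^ 2 * C₀ := by
    have t1 := mul_le_mul_of_nonneg_left hw1 (show 0 ≤ x ^ 2 by positivity)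
    refine le_of_mul_le_mul_right ?_ hwp
    linarith
  have e5 : x ^ 2 * W ^ q ≤ 3 * (j + 2) ^ 2 * C₀ / c₀ := by
    rw [le_div_iff₀ hc₀]; linarith
  have e6 : (x ^ (j + 2) * W) ^ q ≤ x ^ 2 * W ^ q := by
    rw [Real.mul_rpow (by positivity) hwp.le]
    refine mul_le_mul_of_nonneg_right ?_ (Real.rpow_nonneg hwp.le _)
    rw [← Real.rpow_natCast x (j + 2), ← Real.rpow_mul hx0, ← Real.rpow_natCast x 2]
    exact Real.rpow_le_rpow_of_exponent_ge hxp (hχ.le1 z₀) (by exact_mod_cast hj)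
  calc x ^ (j + 2) * W = ((x ^ (j + 2) * W) ^ q) ^ (1 / q) := by
        rw [← Real.rpow_mul hm.le, mul_one_div_cancel hq.ne', Real.rpow_one]
    _ ≤ _ := Real.rpow_le_rpow (Real.rpow_nonneg hm.le _) (e6.trans e5) (by positivity)

lemma Sys.compare {s p θ α β : ℝ} (hs : 0 ≤ s) (hθ : 1 < θ) (hpθ : θ ≤ p)
    (h1 : β * p = α + 2) (h2 : α * θ = β + 2) (hβ : 0 < β) {u v ξ ζ : Pt N₁ N₂ → ℝ}
    (h : Sys s p θ u v ξ ζ) (z : Pt N₁ N₂) :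
    v z ^ (p + 1) ≤ (p + 1) / (θ + 1) * u z ^ (θ + 1) := by
  obtain ⟨C₀, χ, hχ⟩ := exists_cut (N₁ := N₁) (N₂ := N₂) hs
  set σ := (θ + 1) / (p + 1) with hσ
  have hp : 1 < p := by linarith
  have hσ0 : 0 < σ := by positivity
  have hσ1 : σ ≤ 1 := by rw [hσ, div_le_one (by linarith)]; linarith
  have hσp : σ * (p + 1) = θ + 1 := by rw [hσ]; field_simp
  set C := (1 / σ) ^ (1 / (p + 1)) with hC
  have hC0 : 0 < C := Real.rpow_pos_of_pos (by positivity) _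
  have hCp : C ^ (p + 1) = 1 / σ := by
    rw [hC, ← Real.rpow_mul (by positivity), one_div_mul_cancel (by linarith), Real.rpow_one]
  have hCσ : C * σ = (C ^ p)⁻¹ := by
    rw [Real.rpow_add_one hC0.ne'] at hCp
    have : C ^ p ≠ 0 := (Real.rpow_pos_of_pos hC0 _).ne'
    field_simp
    field_simp at hCp
    linarith
  set q := p - 1 + (σ - 1) / σ with hqdef
  have hσi : 1 / σ = (p + 1) / (θ + 1) := by rw [hσ]; field_simp
  have hq : 0 < q := by
    have : q = p - 1 / σ := by rw [hqdef]; field_simp; ring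
    rw [this, hσi, sub_pos, div_lt_iff₀ (by linarith)]
    nlinarith
  set c₀ := (C ^ p)⁻¹ * (C ^ ((σ - 1) / σ))⁻¹ with hc₀
  have hc₀p : 0 < c₀ := mul_pos (inv_pos.2 (Real.rpow_pos_of_pos hC0 _))
    (inv_pos.2 (Real.rpow_pos_of_pos hC0 _))
  obtain ⟨j, hj⟩ : ∃ j : ℕ, 2 ≤ ((j + 2 : ℕ) : ℝ) * q := by
    obtain ⟨j, hj⟩ := exists_nat_gt (2 / q)
    rw [div_lt_iff₀ hq] at hj
    refine ⟨j, ?_⟩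
    push_cast; nlinarith
  set A := (3 * (j + 2) ^ 2 * C₀ / c₀) ^ (1 / q) with hA
  -- the uniform bound for all systems
  have key : ∀ u v ξ ζ : Pt N₁ N₂ → ℝ, Sys s p θ u v ξ ζ → ∀ z,
      χ z ^ (j + 2) * (v z + -C * u z ^ σ) ≤ A := by
    intro u v ξ ζ h
    have hl : Sm (fun z => -C * u z ^ σ) := contDiff_const.mul (h.hu.rpow h.pu σ)
    refine max_bound hχ hc₀p hq hj (w := fun z => v z + -C * u z ^ σ) (h.hv.add hl) ?_
    intro z hz
    have hu := h.pu z
    have hv := h.pv z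
    rw [La_add s h.hv hl, La_cmul s (-C) (h.hu.rpow h.pu σ), La_rpow s h.hu h.pu, h.eu, h.ev]
    set l := C * u z ^ σ with hldef
    have hus : 0 < u z ^ σ := Real.rpow_pos_of_pos hu _
    have hl0 : 0 < l := mul_pos hC0 hus
    have hlv : l < v z := by linarith
    have hwl : v z + -C * u z ^ σ = v z - l := by rw [hldef]; ring
    rw [hwl] at hz ⊢
    have hus1 : 0 < u z ^ (σ - 1) := Real.rpow_pos_of_pos hu _
    have b1 : 0 ≤ C * σ * (1 - σ) * u z ^ (σ - 1 - 1) * Gam s u u z :=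
      mul_nonneg (mul_nonneg (mul_nonneg (by positivity) (by linarith))
        (Real.rpow_nonneg hu.le _)) (Gam_nonneg _ _ _)
    have b2 : u z ^ θ = (C ^ p)⁻¹ * u z ^ (σ - 1) * l ^ p := by
      rw [hldef, Real.mul_rpow hC0.le hus.le, ← Real.rpow_mul hu.le]
      have : u z ^ θ = u z ^ (σ - 1) * u z ^ (σ * p) := by
        rw [← Real.rpow_add hu]; congr 1; linarith
      rw [this]
      have : C ^ p ≠ 0 := (Real.rpow_pos_of_pos hC0 _).ne'
      field_simp
    have b3 : v z ^ (p - 1) * (v z - l) ≤ v z ^ p - l ^ p := by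
      have t1 : l ^ p = l ^ (p - 1) * l := by rw [← Real.rpow_add_one hl0.ne']; congr 1; ring
      have t2 : v z ^ p = v z ^ (p - 1) * v z := by
        rw [← Real.rpow_add_one hv.ne']; congr 1; ring
      have t3 : l ^ (p - 1) ≤ v z ^ (p - 1) := Real.rpow_le_rpow hl0.le hlv.le (by linarith)
      have := mul_le_mul_of_nonneg_right t3 hl0.le
      rw [t1, t2]; linarith
    have b4 : (C ^ ((σ - 1) / σ))⁻¹ * v z ^ ((σ - 1) / σ) ≤ u z ^ (σ - 1) := by
      have hexp : (σ - 1) / σ ≤ 0 := div_nonpos_of_nonpos_of_nonneg (by linarith) hσ0.le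
      have t1 : v z ^ ((σ - 1) / σ) ≤ l ^ ((σ - 1) / σ) :=
        Real.rpow_le_rpow_of_nonpos hl0 hlv.le hexp
      have t2 : l ^ ((σ - 1) / σ) = C ^ ((σ - 1) / σ) * u z ^ (σ - 1) := by
        rw [hldef, Real.mul_rpow hC0.le hus.le, ← Real.rpow_mul hu.le]
        congr 2; field_simp
      have hCpos : 0 < C ^ ((σ - 1) / σ) := Real.rpow_pos_of_pos hC0 _
      rw [inv_mul_le_iff₀ hCpos, ← t2]; exact t1
    have b5 : (v z - l) ^ q ≤ v z ^ ((σ - 1) / σ) * v z ^ (p - 1) := by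
      rw [← Real.rpow_add hv, show (σ - 1) / σ + (p - 1) = q by rw [hqdef]; ring]
      exact Real.rpow_le_rpow hz.le (by linarith) hq.le
    have hvp : 0 < v z ^ (p - 1) := Real.rpow_pos_of_pos hv _
    have hCp0 : 0 < (C ^ p)⁻¹ := inv_pos.2 (Real.rpow_pos_of_pos hC0 _)
    have hCs0 : 0 < (C ^ ((σ - 1) / σ))⁻¹ := inv_pos.2 (Real.rpow_pos_of_pos hC0 _)
    calc c₀ * ((v z - l) ^ q * (v z - l))
        ≤ c₀ * ((v z ^ ((σ - 1) / σ) * v z ^ (p - 1)) * (v z - l)) := by gcongr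
      _ = (C ^ p)⁻¹ * (((C ^ ((σ - 1) / σ))⁻¹ * v z ^ ((σ - 1) / σ)) * (v z ^ (p - 1) * (v z - l))) := by
          rw [hc₀]; ring
      _ ≤ (C ^ p)⁻¹ * (u z ^ (σ - 1) * (v z ^ p - l ^ p)) := by gcongr
      _ ≤ _ := by
          rw [b2, ← hCσ]
          linarith
  have hασ : α * σ = β := by
    have : α * (θ + 1) = β * (p + 1) := by linarith
    rw [hσ, ← mul_div_assoc, this]; field_simp
  have hA0 : 0 ≤ A := Real.rpow_nonneg (by have := hχ.C1; positivity) _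
  have main : v z ≤ C * u z ^ σ := by
    by_contra hcon
    push Not at hcon
    have hup : ∀ R : ℝ, 1 ≤ R → ‖z‖ ≤ R → R ^ β * (v z - C * u z ^ σ) ≤ A := by
      intro R hR hzR
      have hR0 : 0 < R := by linarith
      have hk := key _ _ _ _ (h.scale h1 h2 hR0) (R⁻¹ • z.1, (R ^ (1 + s))⁻¹ • z.2)
      have hR1 : R ≤ R ^ (1 + s) := by
        calc R = R ^ (1 : ℝ) := (Real.rpow_one R).symm
          _ ≤ _ := Real.rpow_le_rpow_of_exponent_le hR (by linarith)
      have hRs : 0 < R ^ (1 + s) := Real.rpow_pos_of_pos hR0 _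
      have hdl : dl s R (R⁻¹ • z.1, (R ^ (1 + s))⁻¹ • z.2) = z := by
        rw [dl_apply]
        simp only [smul_smul]
        rw [mul_inv_cancel₀ hR0.ne', mul_inv_cancel₀ hRs.ne']; simp
      have hmem : (R⁻¹ • z.1, (R ^ (1 + s))⁻¹ • z.2) ∈ Metric.closedBall (0 : Pt N₁ N₂) 1 := by
        rw [mem_closedBall_zero_iff, Prod.norm_def, max_le_iff]
        rw [Prod.norm_def, max_le_iff] at hzR
        constructor
        · rw [norm_smul, norm_inv, Real.norm_eq_abs, abs_of_pos hR0, inv_mul_le_iff₀ hR0]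
          linarith [hzR.1]
        · rw [norm_smul, norm_inv, Real.norm_eq_abs, abs_of_pos hRs, inv_mul_le_iff₀ hRs]
          linarith [hzR.2]
      rw [hχ.one _ hmem, hdl, one_pow, one_mul,
        Real.mul_rpow (Real.rpow_nonneg hR0.le _) (h.pu z).le, ← Real.rpow_mul hR0.le, hασ] at hk
      linarith
    have ht := tendsto_rpow_atTop hβ
    have hd : 0 < v z - C * u z ^ σ := by linarith
    obtain ⟨R, ⟨hR1, hR2⟩, hR3⟩ := (((Filter.eventually_ge_atTop (1 : ℝ)).and
      (Filter.eventually_ge_atTop ‖z‖)).and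
      (ht.eventually_gt_atTop (A / (v z - C * u z ^ σ)))).exists
    rw [div_lt_iff₀ hd] at hR3
    linarith [hup R hR1 hR2]
  calc v z ^ (p + 1) ≤ (C * u z ^ σ) ^ (p + 1) :=
        Real.rpow_le_rpow (h.pv z).le main (by linarith)
    _ = _ := by
      rw [Real.mul_rpow hC0.le (Real.rpow_nonneg (h.pu z).le _), hCp, ← Real.rpow_mul (h.pu z).le,
        hσp, hσi]

lemma Gam_young (s : ℝ) (f g : Pt N₁ N₂ → ℝ) (z : Pt N₁ N₂) (a b : ℝ) :
    a * b * Gam s f g z ≤ a ^ 2 / 2 * Gam s f f z + b ^ 2 / 2 * Gam s g g z := by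
  have h := Gam_cs s f g z
  have h1 := Gam_nonneg s f z
  have h2 := Gam_nonneg s g z
  have h3 : 0 ≤ a ^ 2 / 2 * Gam s f f z + b ^ 2 / 2 * Gam s g g z := by positivity
  refine abs_le_of_sq_le_sq' ?_ h3 |>.2
  have h4 := mul_le_mul_of_nonneg_left h (show 0 ≤ a ^ 2 * b ^ 2 by positivity)
  have h5 := sq_nonneg (a ^ 2 / 2 * Gam s f f z - b ^ 2 / 2 * Gam s g g z)
  nlinarith

/-- The carré du champ of a product. -/
lemma Gam_prod (s : ℝ) {f g : Pt N₁ N₂ → ℝ} (hf : Sm f) (hg : Sm g) (z : Pt N₁ N₂) :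
    Gam s (fun z => f z * g z) (fun z => f z * g z) z
      = Gam s f (fun z => f z * (g z * g z)) z + f z ^ 2 * Gam s g g z := by
  rw [Gam_mul s _ hf hg, Gam_comm s _ g, Gam_comm s _ f, Gam_mul s g hf hg, Gam_mul s f hf hg,
    Gam_mul s f hf (hg.mul' hg), Gam_mul s f hg hg, Gam_comm s g f]
  ring

lemma hardy_aux {s : ℝ} (hs : 0 ≤ s) {f φ : Pt N₁ N₂ → ℝ} (hf : Sm f) (pf : ∀ z, 0 < f z)
    (hφ : Sm φ) (hc : HasCompactSupport φ) :
    ∃ N : Pt N₁ N₂ → ℝ, Integrable N ∧ ∫ z, N z = 0 ∧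
      ∀ z, -La s f z * (φ z ^ 2 / f z) + N z ≤ Gam s φ φ z := by
  have hσ : Sm (fun z => φ z / f z) := hφ.div hf (fun z => (pf z).ne')
  have hφe : φ = fun z => f z * (φ z / f z) := by
    funext z; rw [mul_div_cancel₀ _ (pf z).ne']
  have hcs : HasCompactSupport (fun z => f z * (φ z / f z * (φ z / f z))) :=
    HasCompactSupport.intro hc fun z hz => by simp [image_eq_zero_of_notMem_tsupport hz]
  obtain ⟨i1, e1⟩ := ibp hs hf (hf.mul' (hσ.mul' hσ)) hcs
  refine ⟨_, i1, e1, fun z => ?_⟩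
  have h1 : Gam s φ φ z = Gam s (fun z => f z * (φ z / f z)) (fun z => f z * (φ z / f z)) z := by
    rw [← hφe]
  rw [h1, Gam_prod s hf hσ]
  have h2 := Gam_nonneg s (fun z => φ z / f z) z
  have h3 : f z * (φ z / f z * (φ z / f z)) = φ z ^ 2 / f z := by
    have := (pf z).ne'
    field_simp
  rw [h3]
  have := mul_nonneg (sq_nonneg (f z)) h2
  linarith

/-- The second order form of stability. -/
lemma Sys.hardy {s p θ : ℝ} (hs : 0 ≤ s) (hp : 0 < p) (hθ : 0 < θ) {u v ξ ζ : Pt N₁ N₂ → ℝ}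
    (h : Sys s p θ u v ξ ζ) {φ : Pt N₁ N₂ → ℝ} (hφ : Sm φ) (hc : HasCompactSupport φ)
    {F G N : Pt N₁ N₂ → ℝ} (hF : Integrable F) (hG : Integrable G) (hN : Integrable N)
    (hN0 : ∫ z, N z = 0)
    (hFG : ∀ z, F z + Gam s φ φ z ≤
      G z + N z + √(p * θ) * (v z ^ ((p - 1) / 2) * u z ^ ((θ - 1) / 2) * φ z ^ 2)) :
    ∫ z, F z ≤ ∫ z, G z := by
  obtain ⟨N1, i1, e1, k1⟩ := hardy_aux hs h.hξ h.pξ hφ hc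
  obtain ⟨N2, i2, e2, k2⟩ := hardy_aux hs h.hζ h.pζ hφ hc
  refine int_le_of_null hF hG (hN.sub ((i1.add i2).const_mul (1 / 2))) ?_ ?_
  · rw [integral_sub' hN ((i1.add i2).const_mul (1 / 2)), integral_const_mul, integral_add' i1 i2,
      e1, e2, hN0]; simp
  intro z
  have a := hFG z
  have a1 := k1 z
  have a2 := k2 z
  simp only [Pi.sub_apply, Pi.add_apply]
  have hξ := h.pξ z
  have hζ := h.pζ z
  have b1 : p * v z ^ (p - 1) * ζ z * (φ z ^ 2 / ξ z) ≤ -La s ξ z * (φ z ^ 2 / ξ z) :=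
    mul_le_mul_of_nonneg_right (by linarith [h.eξ z]) (by positivity)
  have b2 : θ * u z ^ (θ - 1) * ξ z * (φ z ^ 2 / ζ z) ≤ -La s ζ z * (φ z ^ 2 / ζ z) :=
    mul_le_mul_of_nonneg_right (by linarith [h.eζ z]) (by positivity)
  have b3 : 2 * (√(p * θ) * (v z ^ ((p - 1) / 2) * u z ^ ((θ - 1) / 2) * φ z ^ 2)) ≤
      p * v z ^ (p - 1) * ζ z * (φ z ^ 2 / ξ z) + θ * u z ^ (θ - 1) * ξ z * (φ z ^ 2 / ζ z) := by
    have hV : v z ^ (p - 1) = (v z ^ ((p - 1) / 2)) ^ 2 := by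
      rw [← Real.rpow_natCast, ← Real.rpow_mul (h.pv z).le]; congr 1; push_cast; ring
    have hU : u z ^ (θ - 1) = (u z ^ ((θ - 1) / 2)) ^ 2 := by
      rw [← Real.rpow_natCast, ← Real.rpow_mul (h.pu z).le]; congr 1; push_cast; ring
    rw [hV, hU, Real.sqrt_mul hp.le]
    set P := √p with hP
    set T := √θ with hT
    have hp2 : p = P ^ 2 := (Real.sq_sqrt hp.le).symm
    have hθ2 : θ = T ^ 2 := (Real.sq_sqrt hθ.le).symm
    set V := v z ^ ((p - 1) / 2)
    set U := u z ^ ((θ - 1) / 2)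
    have : 0 ≤ φ z ^ 2 / (ξ z * ζ z) * (P * V * ζ z - T * U * ξ z) ^ 2 := by positivity
    have e : φ z ^ 2 / (ξ z * ζ z) * (P * V * ζ z - T * U * ξ z) ^ 2 =
      P ^ 2 * V ^ 2 * ζ z * (φ z ^ 2 / ξ z) + T ^ 2 * U ^ 2 * ξ z * (φ z ^ 2 / ζ z)
      - 2 * (P * T * (V * U * φ z ^ 2)) := by
      field_simp; ring
    rw [e, ← hp2, ← hθ2] at this
    linarith
  linarith

lemma caseB3 {s p θ C₀ : ℝ} (hs : 0 ≤ s) (hθ : 1 < θ) (hpθ : θ ≤ p) {χ : Pt N₁ N₂ → ℝ}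
    (hχ : Cut s C₀ χ) {n : ℕ} (hn : n ≠ 0) :
    ∃ B : ℝ, 0 ≤ B ∧ ∀ u v ξ ζ : Pt N₁ N₂ → ℝ, Sys s p θ u v ξ ζ →
      (∀ z, v z ^ (p + 1) ≤ (p + 1) / (θ + 1) * u z ^ (θ + 1)) →
      ∫ z, (u z ^ ((θ + 3) / 2) * v z ^ ((p - 1) / 2)) * χ z ^ (2 * n + 2) ≤
        B * ∫ z, u z ^ 2 * χ z ^ (2 * n) := by
  have hp : 1 < p := by linarith
  set S := √((p + 1) / (θ + 1)) with hS
  have hS2 : S ^ 2 = (p + 1) / (θ + 1) := Real.sq_sqrt (by positivity)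
  set δ := √(p * θ) - S with hδ
  have hδ0 : 0 < δ := by
    rw [hδ, sub_pos, hS]
    apply Real.sqrt_lt_sqrt (by positivity)
    rw [div_lt_iff₀ (by linarith)]
    nlinarith [mul_pos (show 0 < p by linarith) (show 0 < θ - 1 by linarith)]
  have hC1 := hχ.C1
  set c : ℝ := n + 1 with hc
  refine ⟨c ^ 2 * C₀ / δ, by positivity, fun u v ξ ζ h hcmp => ?_⟩
  have hρ : Sm (fun z => χ z ^ (n + 1)) := hχ.sm.pow' _
  have iY : Integrable (fun z => (u z ^ ((θ + 3) / 2) * v z ^ ((p - 1) / 2)) * χ z ^ (2 * n + 2)) :=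
    hχ.integ ((h.hu.rpow h.pu _).continuous.mul (h.hv.rpow h.pv _).continuous) (by omega)
  have iI : Integrable (fun z => u z ^ 2 * χ z ^ (2 * n)) :=
    hχ.integ (h.hu.continuous.pow 2) (by omega)
  have hcs : HasCompactSupport (fun z => u z * (χ z ^ (n + 1) * χ z ^ (n + 1))) :=
    HasCompactSupport.intro hχ.cs fun z hz => by simp [image_eq_zero_of_notMem_tsupport hz]
  obtain ⟨i1, e1⟩ := ibp hs h.hu (h.hu.mul' (hρ.mul' hρ)) hcs
  have key := h.hardy hs (by linarith) (by linarith) (h.hu.mul' hρ) (hχ.cs_mul u (by omega))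
    (iY.const_mul δ) (iI.const_mul (c ^ 2 * C₀)) i1 e1 ?_
  · rw [integral_const_mul, integral_const_mul] at key
    rw [div_mul_eq_mul_div, le_div_iff₀ hδ0]
    linarith
  intro z
  have hu := h.pu z
  have hv := h.pv z
  rw [Gam_prod s h.hu hρ, h.eu]
  have g1 : Gam s (fun z => χ z ^ (n + 1)) (fun z => χ z ^ (n + 1)) z
      = c ^ 2 * χ z ^ (2 * n) * Gam s χ χ z := by
    rw [Gam_pow s _ hχ.sm n, Gam_comm s _ χ, Gam_pow s _ hχ.sm n, hc]; ring
  rw [g1]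
  have hx := hχ.nn z
  have g2 := mul_le_mul_of_nonneg_left (hχ.gam z) (show 0 ≤ u z ^ 2 * (c ^ 2 * χ z ^ (2 * n)) by positivity)
  set Vh := v z ^ ((p - 1) / 2) with hVh
  have hVh0 : 0 < Vh := Real.rpow_pos_of_pos hv _
  have y1 : u z ^ ((θ + 3) / 2) = u z ^ ((θ - 1) / 2) * u z ^ 2 := by
    rw [← Real.rpow_natCast, ← Real.rpow_add hu]; congr 1; push_cast; ring
  have y2 : u z ^ ((θ + 3) / 2) = u z ^ ((θ + 1) / 2) * u z := by
    rw [← Real.rpow_add_one hu.ne']; congr 1; ring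
  have y3 : v z ^ p = Vh * v z ^ ((p + 1) / 2) := by
    rw [hVh, ← Real.rpow_add hv]; congr 1; ring
  have y4 : v z ^ ((p + 1) / 2) ≤ S * u z ^ ((θ + 1) / 2) := by
    have a1 : (v z ^ ((p + 1) / 2)) ^ 2 = v z ^ (p + 1) := by
      rw [← Real.rpow_natCast, ← Real.rpow_mul hv.le]; congr 1; push_cast; ring
    have a2 : (u z ^ ((θ + 1) / 2)) ^ 2 = u z ^ (θ + 1) := by
      rw [← Real.rpow_natCast, ← Real.rpow_mul hu.le]; congr 1; push_cast; ring
    refine abs_le_of_sq_le_sq' ?_ (mul_nonneg (Real.sqrt_nonneg _) (Real.rpow_nonneg hu.le _)) |>.2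
    rw [mul_pow, a1, a2, hS2]; exact hcmp z
  have hxx : χ z ^ (n + 1) * χ z ^ (n + 1) = χ z ^ (2 * n + 2) := by ring
  have hxn : 0 ≤ χ z ^ (2 * n + 2) := by positivity
  have y5 : v z ^ p * (u z * χ z ^ (2 * n + 2)) ≤ S * (u z ^ ((θ + 3) / 2) * Vh * χ z ^ (2 * n + 2)) := by
    have := mul_le_mul_of_nonneg_left y4 (show 0 ≤ Vh * u z * χ z ^ (2 * n + 2) by positivity)
    rw [y2, y3]
    linarith
  have y6 : Vh * u z ^ ((θ - 1) / 2) * (u z * χ z ^ (n + 1)) ^ 2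
      = u z ^ ((θ + 3) / 2) * Vh * χ z ^ (2 * n + 2) := by
    rw [y1]; ring
  rw [y6, hxx, hδ]
  linarith

lemma caseB4 {s p θ C₀ : ℝ} (hs : 0 ≤ s) (hθ : 1 < θ) {χ : Pt N₁ N₂ → ℝ}
    (hχ : Cut s C₀ χ) {n : ℕ} (hn : n ≠ 0) :
    ∃ D : ℝ, 0 ≤ D ∧ ∀ u v ξ ζ : Pt N₁ N₂ → ℝ, Sys s p θ u v ξ ζ →
      ∫ z, (u z ^ (θ + 1 / θ) * v z ^ (-1 : ℝ)) * χ z ^ (2 * n + 2) ≤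
        D * ∫ z, u z ^ (1 / θ) * χ z ^ (2 * n) := by
  set k := 1 / θ with hk
  have hk0 : 0 < k := by positivity
  have hk1 : k < 1 := by rw [hk, div_lt_one (by linarith)]; exact hθ
  set t := (k ^ 2 + 1) / (2 * (1 - k)) with ht
  have hk1' : 0 < 1 - k := by linarith
  have ht0 : 0 < t := by positivity
  have hC1 := hχ.C1
  set M : ℝ := 2 * n + 2 with hM
  refine ⟨M ^ 2 / 2 * (1 + t ^ 2) * C₀, by positivity, fun u v ξ ζ h => ?_⟩
  have hρ : Sm (fun z => χ z ^ (2 * n + 2)) := hχ.sm.pow' _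
  have hUk := h.hu.rpow h.pu k
  have hUk1 := h.hu.rpow h.pu (k - 1)
  have hVi := h.hv.rpow h.pv (-1)
  have iX : Integrable (fun z => (u z ^ (θ + k) * v z ^ (-1 : ℝ)) * χ z ^ (2 * n + 2)) :=
    hχ.integ ((h.hu.rpow h.pu _).continuous.mul hVi.continuous) (by omega)
  have iI := hχ.integ hUk.continuous (n := 2 * n) (by omega)
  obtain ⟨i1, e1⟩ := ibp hs h.hv ((hUk.mul' hVi).mul' hρ) (hχ.cs_mul _ (by omega))
  obtain ⟨i2, e2⟩ := ibp hs h.hu (hUk1.mul' hρ) (hχ.cs_mul _ (by omega))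
  have key := int_le_of_null iX (iI.const_mul (M ^ 2 / 2 * (1 + t ^ 2) * C₀))
    ((i1.add (i2.const_mul t)).neg) ?_ ?_
  · rw [integral_const_mul] at key
    exact key
  · rw [integral_neg', integral_add' i1 (i2.const_mul t), integral_const_mul, e1, e2]; simp
  intro z
  have hu := h.pu z
  have hv := h.pv z
  have hx := hχ.nn z
  simp only [Pi.neg_apply, Pi.add_apply]
  have g1 : ∀ f : Pt N₁ N₂ → ℝ, Gam s f (fun z => χ z ^ (2 * n + 2)) z
      = M * χ z ^ (2 * n + 1) * Gam s f χ z := by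
    intro f
    have := Gam_pow s f hχ.sm (2 * n + 1) z
    rw [this, hM]; push_cast; ring
  rw [Gam_mul s v (hUk.mul' hVi) hρ, Gam_mul s v hUk hVi, Gam_mul s u hUk1 hρ, g1, g1,
    Gam_rpow s v h.hv h.pv, Gam_rpow s v h.hu h.pu, Gam_rpow s u h.hu h.pu, h.eu, h.ev,
    Gam_comm s v u]
  obtain ⟨-, -, -, q4, q5, -, q7⟩ := pow_ids (χ z) n
  have r1 : u z ^ (k - 1) = u z ^ k * (u z)⁻¹ := by rw [Real.rpow_sub_one hu.ne']; ring
  have r2 : u z ^ (k - 1 - 1) = u z ^ k * (u z)⁻¹ ^ 2 := by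
    rw [Real.rpow_sub_one hu.ne', Real.rpow_sub_one hu.ne']; field_simp
  have r3 : v z ^ (-1 : ℝ) = (v z)⁻¹ := Real.rpow_neg_one _
  have r4 : v z ^ ((-1 : ℝ) - 1) = (v z)⁻¹ ^ 2 := by
    rw [Real.rpow_sub_one hv.ne', r3]; field_simp
  have r5 : u z ^ (θ + k) = u z ^ θ * u z ^ k := Real.rpow_add hu _ _
  have hz2 : 0 ≤ v z ^ p * (u z ^ (k - 1) * χ z ^ (2 * n + 2)) :=
    mul_nonneg (Real.rpow_nonneg hv.le _) (mul_nonneg (Real.rpow_nonneg hu.le _) (by positivity))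
  rw [r1] at hz2
  rw [q4] at hz2
  rw [q4, q5, q7, r1, r2, r3, r4, r5]
  have hUk0 : 0 < u z ^ k := Real.rpow_pos_of_pos hu _
  have y1 := Gam_young s v χ z (χ z * (v z)⁻¹) M
  have y2 := Gam_young s u v z (k * χ z * (u z)⁻¹) (χ z * (v z)⁻¹)
  have y3 := Gam_young s u χ z (χ z * (u z)⁻¹) (t * M)
  have hg := hχ.gam z
  have hcoef : t * (1 - k) = (k ^ 2 + 1) / 2 := by rw [ht]; field_simp
  set U := u z ^ k
  set X := χ z ^ n
  set x := χ z
  set a := (u z)⁻¹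
  set b := (v z)⁻¹
  have y4 := mul_le_mul_of_nonneg_left hg (show 0 ≤ M ^ 2 / 2 * (1 + t ^ 2) by positivity)
  have y5 : x * b * M * Gam s v χ z - x ^ 2 * b ^ 2 * Gam s v v z + k * x * a * (x * b) * Gam s u v z
      + x * a * (t * M) * Gam s u χ z - t * (1 - k) * (x ^ 2 * a ^ 2 * Gam s u u z) ≤
      M ^ 2 / 2 * (1 + t ^ 2) * C₀ := by
    rw [hcoef]
    linarith
  have y6 := mul_le_mul_of_nonneg_left y5 (show 0 ≤ U * X ^ 2 by positivity)
  have y7 := mul_nonneg ht0.le hz2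
  linarith

lemma caseB_bound {s p θ α β C₀ : ℝ} (hs : 0 ≤ s) (hθ : 1 < θ) (hpθ : θ ≤ p)
    (h1 : β * p = α + 2) (h2 : α * θ = β + 2) (hβ : 0 < β)
    {χ : Pt N₁ N₂ → ℝ} (hχ : Cut s C₀ χ) :
    ∃ (n : ℕ) (C : ℝ), ∀ u v ξ ζ : Pt N₁ N₂ → ℝ, Sys s p θ u v ξ ζ →
      ∫ z, (u z ^ ((θ + 3) / 2) * v z ^ ((p - 1) / 2)) * χ z ^ (2 * n + 2) ≤ C := by
  have hp : 1 < p := by linarith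
  have hθ0 : 0 < θ := by linarith
  set D' := (p - 1) * (θ + 1 / θ) + θ + 3 with hD'
  have hp1 : 0 < p - 1 := by linarith
  have hD'0 : 0 < D' := by positivity
  have hθθ : 2 < θ + 1 / θ := by
    have : θ + 1 / θ - 2 = (θ - 1) ^ 2 / θ := by field_simp; ring
    have h3 : 0 < (θ - 1) ^ 2 / θ := by
      have : 0 < θ - 1 := by linarith
      positivity
    linarith
  set μ := 4 / D' with hμ
  set l := 2 * (p - 1) / D' with hl
  have hμ0 : 0 < μ := by positivity
  have hl0 : 0 < l := by positivity
  have hr : l / 1 + μ / 1 < 1 := by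
    rw [div_one, div_one, hl, hμ, ← add_div, div_lt_one hD'0, hD']
    nlinarith
  obtain ⟨k, hk⟩ : ∃ k : ℕ, ((2 * k + 3 : ℕ) : ℝ) * (l / 1 + μ / 1) ≤ ((2 * k + 1 : ℕ) : ℝ) := by
    generalize l / 1 + μ / 1 = r1 at hr
    obtain ⟨k1, hk1⟩ := exists_nat_gt (2 / (2 * (1 - r1)))
    rw [div_lt_iff₀ (by linarith)] at hk1
    refine ⟨k1, ?_⟩
    push_cast; nlinarith
  set n := k + 1 with hn
  obtain ⟨B, hB, H3⟩ := caseB3 hs hθ hpθ hχ (n := n) (by omega)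
  obtain ⟨D, hD, H4⟩ := caseB4 (p := p) hs hθ hχ (n := n) (by omega)
  set K := (B + 2) ^ (1 / l) with hK
  have hK0 : 0 < K := Real.rpow_pos_of_pos (by linarith) _
  have hKl : K ^ l = B + 2 := by
    rw [hK, ← Real.rpow_mul (by linarith), one_div_mul_cancel hl0.ne', Real.rpow_one]
  obtain ⟨C₁, hC₁, Y1⟩ := young_int hχ (a := l) (b := μ) (P := 1) (Q := 1) hl0.le hμ0.le
    one_pos one_pos hr one_pos (m := 2 * k + 1) (M := 2 * k + 3) (by omega) hk
  set ε := 1 / (K * D + 1) with hε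
  have hε0 : 0 < ε := by positivity
  obtain ⟨C₂, hC₂, Y2⟩ := young_T (r := 1 / θ / 2) (ε := ε)
    (by
      have : 1 / θ < 1 := by rw [div_lt_one hθ0]; exact hθ
      linarith) (by positivity) hε0
  have iχ := hχ.integ (F := fun _ => C₂) continuous_const (n := 2 * n) (by omega)
  set C₃ := ∫ z, C₂ * χ z ^ (2 * n) with hC₃
  refine ⟨n, B * (K * D * C₃ + C₁), fun u v ξ ζ h => ?_⟩
  have hcmp := h.compare hs hθ hpθ h1 h2 hβ
  have h3 := H3 u v ξ ζ h hcmp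
  have h4 := H4 u v ξ ζ h
  have hX : Sm (fun z => K * (u z ^ (θ + 1 / θ) * v z ^ (-1 : ℝ))) :=
    contDiff_const.mul ((h.hu.rpow h.pu _).mul' (h.hv.rpow h.pv _))
  have hY : Sm (fun z => u z ^ ((θ + 3) / 2) * v z ^ ((p - 1) / 2)) :=
    (h.hu.rpow h.pu _).mul' (h.hv.rpow h.pv _)
  have y1 := Y1 _ _ hX hY
    (fun z => mul_pos hK0 (mul_pos (Real.rpow_pos_of_pos (h.pu z) _) (Real.rpow_pos_of_pos (h.pv z) _)))
    (fun z => mul_pos (Real.rpow_pos_of_pos (h.pu z) _) (Real.rpow_pos_of_pos (h.pv z) _))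
  have e1 : ∀ z, (K * (u z ^ (θ + 1 / θ) * v z ^ (-1 : ℝ))) ^ l *
      (u z ^ ((θ + 3) / 2) * v z ^ ((p - 1) / 2)) ^ μ * χ z ^ (2 * k + 1 + 1)
      = (B + 2) * (u z ^ 2 * χ z ^ (2 * n)) := by
    intro z
    have hu := h.pu z
    have hv := h.pv z
    have pos : ∀ a b : ℝ, 0 ≤ u z ^ a * v z ^ b := fun a b =>
      mul_nonneg (Real.rpow_nonneg hu.le _) (Real.rpow_nonneg hv.le _)
    rw [Real.mul_rpow hK0.le (pos _ _), hKl,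
      Real.mul_rpow (Real.rpow_nonneg hu.le _) (Real.rpow_nonneg hv.le _),
      Real.mul_rpow (Real.rpow_nonneg hu.le _) (Real.rpow_nonneg hv.le _),
      ← Real.rpow_mul hu.le, ← Real.rpow_mul hu.le, ← Real.rpow_mul hv.le, ← Real.rpow_mul hv.le]
    have a1 : u z ^ ((θ + 1 / θ) * l) * u z ^ ((θ + 3) / 2 * μ) = u z ^ 2 := by
      rw [← Real.rpow_add hu, ← Real.rpow_natCast]
      congr 1
      have : (θ + 1 / θ) * l + (θ + 3) / 2 * μ = 2 * D' / D' := by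
        rw [hl, hμ]
        have : 2 * D' = 2 * (p - 1) * (θ + 1 / θ) + 2 * (θ + 3) := by rw [hD']; ring
        rw [this]; ring
      rw [this, mul_div_cancel_right₀ _ hD'0.ne']; norm_num
    have a2 : v z ^ (-1 * l) * v z ^ ((p - 1) / 2 * μ) = 1 := by
      rw [← Real.rpow_add hv]
      have : -1 * l + (p - 1) / 2 * μ = 0 := by rw [hl, hμ]; ring
      rw [this, Real.rpow_zero]
    rw [show 2 * k + 1 + 1 = 2 * n by omega]
    calc _ = (B + 2) * ((u z ^ ((θ + 1 / θ) * l) * u z ^ ((θ + 3) / 2 * μ)) *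
          (v z ^ (-1 * l) * v z ^ ((p - 1) / 2 * μ)) * χ z ^ (2 * n)) := by ring
      _ = _ := by rw [a1, a2, mul_one]
  simp only [e1, Real.rpow_one, show 2 * k + 3 + 1 = 2 * n + 2 by omega] at y1
  rw [integral_const_mul] at y1
  have e2 : (∫ z, K * (u z ^ (θ + 1 / θ) * v z ^ (-1 : ℝ)) * χ z ^ (2 * n + 2))
      = K * ∫ z, (u z ^ (θ + 1 / θ) * v z ^ (-1 : ℝ)) * χ z ^ (2 * n + 2) := by
    rw [← integral_const_mul]; congr 1; funext z; ring
  rw [e2] at y1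
  have iI : Integrable (fun z => u z ^ 2 * χ z ^ (2 * n)) :=
    hχ.integ (h.hu.continuous.pow 2) (by omega)
  have iK := hχ.integ (h.hu.rpow h.pu (1 / θ)).continuous (n := 2 * n) (by omega)
  have y2 : ∫ z, u z ^ (1 / θ) * χ z ^ (2 * n) ≤ ε * (∫ z, u z ^ 2 * χ z ^ (2 * n)) + C₃ := by
    rw [← integral_const_mul, hC₃, ← integral_add (iI.const_mul ε) iχ]
    refine integral_mono iK ((iI.const_mul ε).add iχ) fun z => ?_
    have hu := h.pu z
    have := mul_le_mul_of_nonneg_right (Y2 (u z ^ 2) (sq_nonneg _)) (pow_nonneg (hχ.nn z) (2 * n))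
    have e3 : (u z ^ 2) ^ (1 / θ / 2) = u z ^ (1 / θ) := by
      rw [← Real.rpow_natCast, ← Real.rpow_mul hu.le]; congr 1; push_cast; ring
    rw [e3] at this
    refine this.trans (le_of_eq ?_)
    ring
  have nI : 0 ≤ ∫ z, u z ^ 2 * χ z ^ (2 * n) := integral_nonneg fun z =>
    mul_nonneg (sq_nonneg _) (pow_nonneg (hχ.nn z) _)
  refine h3.trans (mul_le_mul_of_nonneg_left ?_ hB)
  generalize (∫ z, u z ^ 2 * χ z ^ (2 * n)) = I at *
  generalize (∫ z, u z ^ (1 / θ) * χ z ^ (2 * n)) = I' at *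
  generalize (∫ z, (u z ^ (θ + 1 / θ) * v z ^ (-1 : ℝ)) * χ z ^ (2 * n + 2)) = JX at *
  generalize (∫ z, (u z ^ ((θ + 3) / 2) * v z ^ ((p - 1) / 2)) * χ z ^ (2 * n + 2)) = JY at *
  have f1 : K * JX ≤ K * (D * (ε * I + C₃)) :=
    mul_le_mul_of_nonneg_left (h4.trans (mul_le_mul_of_nonneg_left y2 hD)) hK0.le
  have f2 : K * D * ε ≤ 1 := by
    rw [hε, mul_one_div, div_le_one (by positivity)]; linarith
  have f3 := mul_le_mul_of_nonneg_right f2 nI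
  linarith

lemma caseB {s p θ α β : ℝ} (hs : 0 ≤ s) (hθ : 1 < θ) (hpθ : θ ≤ p)
    (h1 : β * p = α + 2) (h2 : α * θ = β + 2) (hβ : 0 < β)
    (hdim : (N₁ : ℝ) + (1 + s) * N₂ < 2 + α + β)
    {u v ξ ζ : Pt N₁ N₂ → ℝ} (h : Sys s p θ u v ξ ζ) : False := by
  obtain ⟨C₀, χ, hχ⟩ := exists_cut (N₁ := N₁) (N₂ := N₂) hs
  obtain ⟨n, C, hC⟩ := caseB_bound hs hθ hpθ h1 h2 hβ hχ
  have hαβ : β ≤ α := by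
    have e : α * (θ + 1) = β * (p + 1) := by linarith
    have : β * (θ + 1) ≤ α * (θ + 1) := by
      rw [e]; exact mul_le_mul_of_nonneg_left (by linarith) hβ.le
    exact le_of_mul_le_mul_right this (by linarith)
  exact blowdown (a := (θ + 3) / 2) (b := (p - 1) / 2) (C := C) (M := 2 * n + 2) hs hχ (by omega)
    h1 h2 (by linarith) hC h

lemma main_aux {s p θ α β : ℝ} (hs : 0 ≤ s) (hp : 0 < p) (hθ : 0 < θ) (hpθ : 1 < p * θ)
    (h1 : β * p = α + 2) (h2 : α * θ = β + 2) (hα : 0 < α) (hβ : 0 < β)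
    (hdim : (N₁ : ℝ) + (1 + s) * N₂ < 2 + α + β)
    {u v ξ ζ : Pt N₁ N₂ → ℝ} (h : Sys s p θ u v ξ ζ) : False := by
  rcases le_or_gt p 1 with hp1 | hp1
  · exact caseA hs hp hθ hp1 hpθ h1 h2 hdim h
  rcases le_or_gt θ 1 with hθ1 | hθ1
  · exact caseA hs hθ hp hθ1 (by linarith) h2 h1 (by linarith) h.swap
  rcases le_total θ p with hle | hle
  · exact caseB hs hθ1 hle h1 h2 hβ hdim h
  · exact caseB hs hp1 hle h2 h1 hα (by linarith) h.swap

/-- For `s ≥ 0`, `p, θ > 0` with `pθ > 1`, if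
`N_s = N₁ + (1+s)N₂ < 2 + α + β` where `α = 2(p+1)/(pθ-1)`, `β = 2(θ+1)/(pθ-1)`,
then the Grushin Lane–Emden system has no smooth stable solution. -/
theorem no_stable_solution (N₁ N₂ : ℕ) (hN₁ : 1 ≤ N₁) (hN₂ : 1 ≤ N₂)
    (s p θ : ℝ) (hs : 0 ≤ s) (hp : 0 < p) (hθ : 0 < θ) (hpθ : 1 < p * θ)
    (hdim : (N₁ : ℝ) + (1 + s) * N₂ <
      2 + 2 * (p + 1) / (p * θ - 1) + 2 * (θ + 1) / (p * θ - 1)) :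
    ¬ ∃ u v : Pt N₁ N₂ → ℝ, IsLaneEmdenSol s p θ u v ∧ IsStable s p θ u v := by
  rintro ⟨u, v, hsol, hst⟩
  obtain ⟨ξ, ζ, h⟩ := Sys.of_stable hsol hst
  have hd : 0 < p * θ - 1 := by linarith
  have hne : p * θ - 1 ≠ 0 := hd.ne'
  refine main_aux (α := 2 * (p + 1) / (p * θ - 1)) (β := 2 * (θ + 1) / (p * θ - 1)) hs hp hθ hpθ
    ?_ ?_ (by positivity) (by positivity) hdim h
  · rw [div_mul_eq_mul_div, div_add' _ _ _ hne]
    congr 1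
    ring
  · rw [div_mul_eq_mul_div, div_add' _ _ _ hne]
    congr 1
    ring

end
end

section
/- Let p, θ > 0 and let (u,v) be a smooth stable solution of the Grushin Lane–Emden system on ℝ^N. Then there exist smooth positive functions φ, χ on ℝ^N satisfying −Δ_s φ = p v^{p−1} χ and −Δ_s χ = θ u^{θ−1} φ on all of ℝ^N. -/
open MeasureTheory Real

noncomputable section

variable {N₁ N₂ : ℕ}

/-- Second derivative test, necessary condition. -/
theorem aux_second_deriv {h : ℝ → ℝ} {t : ℝ} (hc : Differentiable ℝ h) (hm : IsLocalMin h t) :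
    0 ≤ deriv (deriv h) t := by
  by_contra hneg
  push Not at hneg
  have hM := isLocalMax_of_deriv_deriv_neg hneg hm.deriv_eq_zero hc.continuous.continuousAt
  have he : h =ᶠ[nhds t] fun _ => h t := by
    filter_upwards [hm, hM] with x h1 h2
    exact le_antisymm h2 h1
  have h2 : deriv (deriv h) t = 0 := by
    have := he.deriv.deriv_eq
    rw [this]
    simp
  linarith

/-- One-variable comparison with a cosine touching from below. -/
theorem aux_touch {g : ℝ → ℝ} {t A a c : ℝ} (hg : ContDiff ℝ 2 g) (hc : 0 < c)
    (heq : A * cos (a * t) = c * g t) (hle : ∀ᶠ r in nhds t, A * cos (a * r) ≤ c * g r) :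
    -a ^ 2 * g t ≤ deriv (deriv g) t := by
  have hgd : Differentiable ℝ g := hg.differentiable (by norm_num)
  have hg' : Differentiable ℝ (deriv g) := by
    have : ContDiff ℝ (1 + 1) g := by simpa [one_add_one_eq_two] using hg
    exact ((contDiff_succ_iff_deriv.1 this).2.2).differentiable (by norm_num)
  have d1 : ∀ r, HasDerivAt (fun r => c * g r - A * cos (a * r))
      (c * deriv g r + A * a * sin (a * r)) r := by
    intro r
    have h1 := ((hgd r).hasDerivAt).const_mul c
    have h2 := (((hasDerivAt_id r).const_mul a).cos).const_mul A
    refine (h1.sub h2).congr_deriv ?_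
    simp; ring
  have d2 : HasDerivAt (fun r => c * deriv g r + A * a * sin (a * r))
      (c * deriv (deriv g) t + A * a * (cos (a * t) * a)) t := by
    have h1 := ((hg' t).hasDerivAt).const_mul c
    have h2 := (((hasDerivAt_id t).const_mul a).sin).const_mul (A * a)
    refine (h1.add h2).congr_deriv ?_
    simp
  have hmin : IsLocalMin (fun r => c * g r - A * cos (a * r)) t := by
    filter_upwards [hle] with r hr
    linarith
  have h0 := aux_second_deriv (fun r => (d1 r).differentiableAt) hmin
  have e1 : deriv (fun r => c * g r - A * cos (a * r)) =
      fun r => c * deriv g r + A * a * sin (a * r) := funext fun r => (d1 r).deriv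
  rw [e1, d2.deriv] at h0
  have : 0 ≤ c * (deriv (deriv g) t + a ^ 2 * g t) := by
    have e : A * a * (cos (a * t) * a) = a ^ 2 * (c * g t) := by rw [← heq]; ring
    rw [e] at h0
    linarith
  have := nonneg_of_mul_nonneg_right this hc
  linarith

/-- Product of cosines. -/
def aux_P {n : ℕ} (a : ℝ) (x : Fin n → ℝ) : ℝ := ∏ k, cos (a * x k)

theorem aux_P_update {n : ℕ} (a : ℝ) (x : Fin n → ℝ) (i : Fin n) (t : ℝ) :
    aux_P a (Function.update x i t) = (∏ k ∈ Finset.univ.erase i, cos (a * x k)) * cos (a * t) := by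
  unfold aux_P
  rw [← Finset.prod_erase_mul _ _ (Finset.mem_univ i)]
  congr 1
  · refine Finset.prod_congr rfl fun k hk => ?_
    rw [Function.update_of_ne (Finset.ne_of_mem_erase hk)]
  · simp

/-- Closed cube. -/
def aux_K (n : ℕ) (a : ℝ) : Set (Fin n → ℝ) :=
  Set.pi Set.univ fun _ => Set.Icc (-(π / (2 * a))) (π / (2 * a))

theorem aux_interior {n : ℕ} {a : ℝ} (ha : 0 < a) {x : Fin n → ℝ} (hx : x ∈ aux_K n a)
    (hP : aux_P a x ≠ 0) (i : Fin n) :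
    ∀ᶠ r in nhds (x i), Function.update x i r ∈ aux_K n a := by
  have hi := hx i (Set.mem_univ i)
  have hci : cos (a * x i) ≠ 0 := by
    unfold aux_P at hP
    rw [Finset.prod_ne_zero_iff] at hP
    exact hP i (Finset.mem_univ i)
  have e : a * (π / (2 * a)) = π / 2 := by field_simp
  have h1 : x i < π / (2 * a) := by
    refine lt_of_le_of_ne hi.2 fun h => hci ?_
    rw [h, e, cos_pi_div_two]
  have h2 : -(π / (2 * a)) < x i := by
    refine lt_of_le_of_ne hi.1 fun h => hci ?_
    rw [← h, mul_neg, e, cos_neg, cos_pi_div_two]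
  filter_upwards [Ioo_mem_nhds h2 h1] with r hr k _
  by_cases hk : k = i
  · subst hk; simpa using ⟨hr.1.le, hr.2.le⟩
  · simpa [Function.update_of_ne hk] using hx k (Set.mem_univ k)

theorem aux_enorm {n : ℕ} {a : ℝ} {x : Fin n → ℝ} (hx : x ∈ aux_K n a) :
    enorm' x ≤ Real.sqrt (n * (π / (2 * a)) ^ 2) := by
  unfold enorm'
  apply Real.sqrt_le_sqrt
  calc ∑ i, x i ^ 2 ≤ ∑ _i : Fin n, (π / (2 * a)) ^ 2 :=
        Finset.sum_le_sum fun i _ => by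
          have hi := hx i (Set.mem_univ i)
          exact sq_le_sq' hi.1 hi.2
    _ = _ := by simp

/-- A positive function with `-Δ_s ξ ≥ η ξ` on the whole space forces `η ≤ 0`. -/
theorem aux_no_eig {N₁ N₂ : ℕ} (hN₁ : 1 ≤ N₁) (hN₂ : 1 ≤ N₂) {s η : ℝ} (hs : 0 ≤ s)
    {ξ : Pt N₁ N₂ → ℝ} (hξ : ContDiff ℝ (⊤ : ℕ∞) ξ) (hpos : ∀ z, 0 < ξ z)
    (hle : ∀ z, η * ξ z ≤ -grushinLap s ξ z) : η ≤ 0 := by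
  by_contra hη
  push Not at hη
  have n1 : (0 : ℝ) < N₁ := by exact_mod_cast hN₁
  have n2 : (0 : ℝ) < N₂ := by exact_mod_cast hN₂
  obtain ⟨a, ha, ha2⟩ : ∃ a : ℝ, 0 < a ∧ N₁ * a ^ 2 = η / 4 := by
    refine ⟨Real.sqrt (η / (4 * N₁)), Real.sqrt_pos.2 (by positivity), ?_⟩
    rw [Real.sq_sqrt (by positivity)]
    field_simp
  set M : ℝ := (Real.sqrt (N₁ * (π / (2 * a)) ^ 2)) ^ (2 * s) with hM
  have hM0 : 0 ≤ M := by positivity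
  obtain ⟨b, hb, hb2⟩ : ∃ b : ℝ, 0 < b ∧ (M + 1) * (N₂ * b ^ 2) = η / 4 := by
    refine ⟨Real.sqrt (η / (4 * N₂ * (M + 1))), Real.sqrt_pos.2 (by positivity), ?_⟩
    rw [Real.sq_sqrt (by positivity)]
    field_simp
  have hcomp : IsCompact (aux_K N₁ a ×ˢ aux_K N₂ b) :=
    (isCompact_univ_pi fun _ => isCompact_Icc).prod (isCompact_univ_pi fun _ => isCompact_Icc)
  have h0 : (0 : Pt N₁ N₂) ∈ aux_K N₁ a ×ˢ aux_K N₂ b := by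
    constructor
    · intro i _; constructor <;> simp <;> positivity
    · intro i _; constructor <;> simp <;> positivity
  have hcont : Continuous fun z : Pt N₁ N₂ => aux_P a z.1 * aux_P b z.2 / ξ z := by
    unfold aux_P
    refine Continuous.div ?_ hξ.continuous fun z => (hpos z).ne'
    fun_prop
  obtain ⟨z, hz, hmax⟩ := hcomp.exists_isMaxOn ⟨0, h0⟩ hcont.continuousOn
  set c : ℝ := aux_P a z.1 * aux_P b z.2 / ξ z with hcdef
  have hc : 0 < c := by
    have h1 : aux_P a (0 : Pt N₁ N₂).1 * aux_P b (0 : Pt N₁ N₂).2 / ξ 0 ≤ c := hmax h0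
    refine lt_of_lt_of_le ?_ h1
    simpa [aux_P] using hpos 0
  have heq : aux_P a z.1 * aux_P b z.2 = c * ξ z := by
    rw [hcdef, div_mul_cancel₀ _ (hpos z).ne']
  have hlew : ∀ z' ∈ aux_K N₁ a ×ˢ aux_K N₂ b, aux_P a z'.1 * aux_P b z'.2 ≤ c * ξ z' := by
    intro z' hz'
    have h1 : aux_P a z'.1 * aux_P b z'.2 / ξ z' ≤ c := hmax hz'
    rwa [div_le_iff₀ (hpos z')] at h1
  have hne : aux_P a z.1 * aux_P b z.2 ≠ 0 := by
    rw [heq]; exact (mul_pos hc (hpos z)).ne'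
  have hX : ∀ i, -a ^ 2 * ξ z ≤ pX i (pX i ξ) z := by
    intro i
    have hg : ContDiff ℝ 2 fun t => ξ (Function.update z.1 i t, z.2) :=
      (contDiff_infty.1 hξ 2).comp
        ((contDiff_update 2 z.1 i).prodMk contDiff_const)
    have key := aux_touch (t := z.1 i) (a := a) (c := c)
      (A := (∏ k ∈ Finset.univ.erase i, cos (a * z.1 k)) * aux_P b z.2) hg hc
      (by
        have := aux_P_update a z.1 i (z.1 i)
        rw [Function.update_eq_self] at this ⊢
        rw [← heq, this]; ring)
      (by
        filter_upwards [aux_interior ha hz.1 (left_ne_zero_of_mul hne) i] with r hr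
        have := hlew (Function.update z.1 i r, z.2) ⟨hr, hz.2⟩
        simp only [aux_P_update] at this
        linarith)
    simpa [pX, Function.update_eq_self] using key
  have hY : ∀ j, -b ^ 2 * ξ z ≤ pY j (pY j ξ) z := by
    intro j
    have hg : ContDiff ℝ 2 fun t => ξ (z.1, Function.update z.2 j t) :=
      (contDiff_infty.1 hξ 2).comp
        (contDiff_const.prodMk (contDiff_update 2 z.2 j))
    have key := aux_touch (t := z.2 j) (a := b) (c := c)
      (A := aux_P a z.1 * ∏ k ∈ Finset.univ.erase j, cos (b * z.2 k)) hg hc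
      (by
        have := aux_P_update b z.2 j (z.2 j)
        rw [Function.update_eq_self] at this ⊢
        rw [← heq, this]; ring)
      (by
        filter_upwards [aux_interior hb hz.2 (right_ne_zero_of_mul hne) j] with r hr
        have := hlew (z.1, Function.update z.2 j r) ⟨hz.1, hr⟩
        simp only [aux_P_update] at this
        linarith)
    simpa [pY, Function.update_eq_self] using key
  have hLX : -(N₁ * a ^ 2) * ξ z ≤ lapX ξ z := by
    have := Finset.sum_le_sum fun i (_ : i ∈ Finset.univ) => hX i
    simp only [Finset.sum_const, Finset.card_univ, Fintype.card_fin, nsmul_eq_mul] at this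
    unfold lapX
    linarith
  have hLY : -(N₂ * b ^ 2) * ξ z ≤ lapY ξ z := by
    have := Finset.sum_le_sum fun i (_ : i ∈ Finset.univ) => hY i
    simp only [Finset.sum_const, Finset.card_univ, Fintype.card_fin, nsmul_eq_mul] at this
    unfold lapY
    linarith
  have hen0 : 0 ≤ enorm' z.1 := Real.sqrt_nonneg _
  set m : ℝ := enorm' z.1 ^ (2 * s) with hm
  have hm0 : 0 ≤ m := Real.rpow_nonneg hen0 _
  have hmM : m ≤ M := Real.rpow_le_rpow hen0 (aux_enorm hz.1) (by positivity)
  have hfin := hle z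
  unfold grushinLap at hfin
  rw [← hm] at hfin
  have h3 : m * (-(N₂ * b ^ 2) * ξ z) ≤ m * lapY ξ z := mul_le_mul_of_nonneg_left hLY hm0
  have h4 : m * (N₂ * b ^ 2) ≤ (M + 1) * (N₂ * b ^ 2) :=
    mul_le_mul_of_nonneg_right (by linarith) (by positivity)
  rw [hb2] at h4
  have h5 := mul_le_mul_of_nonneg_right h4 (hpos z).le
  rw [ha2] at hLX
  have := mul_pos hη (hpos z)
  linarith

/-- for a stable solution there are smooth positive `φ, χ` with
`-Δ_s φ = p v^{p-1} χ` and `-Δ_s χ = θ u^{θ-1} φ` on all of `ℝ^N`. -/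
theorem exists_positive_system (N₁ N₂ : ℕ) (hN₁ : 1 ≤ N₁) (hN₂ : 1 ≤ N₂)
    (s p θ : ℝ) (hs : 0 ≤ s) (hp : 0 < p) (hθ : 0 < θ)
    (u v : Pt N₁ N₂ → ℝ) (hsol : IsLaneEmdenSol s p θ u v) (hstab : IsStable s p θ u v) :
    ∃ φ χ : Pt N₁ N₂ → ℝ, ContDiff ℝ (⊤ : ℕ∞) φ ∧ ContDiff ℝ (⊤ : ℕ∞) χ ∧
      (∀ z, 0 < φ z) ∧ (∀ z, 0 < χ z) ∧
      (∀ z, -grushinLap s φ z = p * (v z) ^ (p - 1) * χ z) ∧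
      (∀ z, -grushinLap s χ z = θ * (u z) ^ (θ - 1) * φ z) := by
  obtain ⟨η, ξ, ζ, hη, h1, h2, h3, h4, h5, h6⟩ := hstab
  have hle : η ≤ 0 := by
    refine aux_no_eig hN₁ hN₂ hs h1 h3 fun z => ?_
    rw [h5 z]
    have a1 := Real.rpow_pos_of_pos (hsol.2.2.2.1 z) (p - 1)
    have a2 := h4 z
    have : 0 < p * (v z) ^ (p - 1) * ζ z := by positivity
    linarith
  have h0 : η = 0 := le_antisymm hle hη
  subst h0
  exact ⟨ξ, ζ, h1, h2, h3, h4, fun z => by simpa using h5 z, fun z => by simpa using h6 z⟩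

end
end
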